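/- arXiv:math/0410105 — 4 statements merged into one kernel-verified Lean document; each statement's English description precedes it below -/
import Mathlib

section
/- Let 0 < b_1 ≤ b_2 ≤ ... < c be real numbers and let (X_n) be a centered Gaussian sequence with covariance Cov(X_i, X_j) = c if i = j and Cov(X_i, X_j) = min(b_i, b_j) if i ≠ j. Then (X_n) is c.i.d., i.e., [X_1,...,X_n, X_{n+2}] has the same joint distribution as [X_1,...,X_n, X_{n+1}] for every n ≥ 0. -/
open MeasureTheory ProbabilityTheory Filter

/-- Condition (5): `(X n)` (indexed from 1) is c.i.d., i.e.
`[X 1, …, X n, X (n+2)] ∼ [X 1, …, X n, X (n+1)]` for all `n ≥ 0`. -/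
def IsCIDnat {Ω E : Type*} {mΩ : MeasurableSpace Ω} [MeasurableSpace E]
    (μ : Measure Ω) (X : ℕ → Ω → E) : Prop :=
  ∀ n : ℕ,
    Measure.map (fun ω (i : Fin (n + 1)) =>
        if (i : ℕ) < n then X ((i : ℕ) + 1) ω else X (n + 2) ω) μ
      = Measure.map (fun ω (i : Fin (n + 1)) => X ((i : ℕ) + 1) ω) μ

/-!
A centered Gaussian vector is determined by its covariance matrix: by the Cramér–Wold theorem its
law is determined by the laws of its linear forms, which are centered normal with variance a
function of the coefficients and the covariance. Suppose that the `X i` have a common variance and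
that `Cov (X i) (X j)` depends only on `min i j` for `i ≠ j`. Replacing the last index of
`1, …, n, n + 1` by `n + 2` does not change the minimum of two distinct indices, so both vectors
have the same covariance matrix. For monotone `b`, `min (b i) (b j)` is `b (min i j)`.
-/

theorem measure_pi_ext_of_map_sum_mul {ι : Type*} [Fintype ι] {μ ν : Measure (ι → ℝ)}
    [IsFiniteMeasure μ] [IsFiniteMeasure ν]
    (h : ∀ a : ι → ℝ, μ.map (fun x => ∑ i, a i * x i) = ν.map (fun x => ∑ i, a i * x i)) :
    μ = ν := by
  classical
  refine Measure.ext_of_charFunDual (funext fun L => ?_)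
  have hL : ⇑L = fun x => ∑ i, L (Pi.single i 1) * x i := by
    funext x
    conv_lhs => rw [pi_eq_sum_univ' x]
    simp only [map_sum, map_smul, smul_eq_mul, mul_comm]
  rw [charFunDual_eq_charFun_map_one, charFunDual_eq_charFun_map_one, hL, h]

theorem sum_fiber_mul {ι κ R : Type*} [Fintype ι] [Fintype κ] [DecidableEq ι]
    [NonUnitalNonAssocSemiring R] (f : κ → ι) (a : κ → R) (x : ι → R) :
    ∑ i, (∑ k with f k = i, a k) * x i = ∑ k, a k * x (f k) := by
  rw [← Finset.sum_fiberwise Finset.univ f fun k => a k * x (f k)]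
  refine Finset.sum_congr rfl fun i _ => ?_
  rw [Finset.sum_mul]
  exact Finset.sum_congr rfl fun k hk => by rw [(Finset.mem_filter.mp hk).2]

/-- `IsCenteredGaussianFamily X K μ`: the finite family `X` is a centered Gaussian vector with
covariance matrix `K` under `μ`, expressed through its linear forms. Only the quadratic form of
`K` enters, so for asymmetric `K` the covariance matrix is its symmetric part; `toNNReal` truncates
the variance to `0` where that form is negative. -/
def IsCenteredGaussianFamily {ι Ω : Type*} [Fintype ι] [MeasurableSpace Ω]
    (X : ι → Ω → ℝ) (K : ι → ι → ℝ) (μ : Measure Ω) : Prop :=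
  ∀ a : ι → ℝ, HasLaw (fun ω => ∑ i, a i * X i ω)
    (gaussianReal 0 (∑ i, ∑ j, a i * a j * K i j).toNNReal) μ

namespace IsCenteredGaussianFamily

variable {ι κ Ω Ω' : Type*} [Fintype ι] [Fintype κ] [MeasurableSpace Ω] [MeasurableSpace Ω']
  {μ : Measure Ω} {ν : Measure Ω'} {X : ι → Ω → ℝ} {Y : ι → Ω' → ℝ} {K : ι → ι → ℝ}

theorem isProbabilityMeasure (hX : IsCenteredGaussianFamily X K μ) : IsProbabilityMeasure μ :=
  (hX 0).isProbabilityMeasure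

theorem aemeasurable (hX : IsCenteredGaussianFamily X K μ) :
    AEMeasurable (fun ω i => X i ω) μ := by
  classical
  refine aemeasurable_pi_lambda _ fun i => ?_
  simpa only [Pi.single_apply, ite_mul, one_mul, zero_mul, Finset.sum_ite_eq', Finset.mem_univ,
    if_true] using (hX (Pi.single i 1)).aemeasurable

theorem comp (hX : IsCenteredGaussianFamily X K μ) (f : κ → ι) :
    IsCenteredGaussianFamily (fun k => X (f k)) (fun k l => K (f k) (f l)) μ := by
  classical
  intro a
  have hvar : ∑ i, ∑ j, (∑ k with f k = i, a k) * (∑ l with f l = j, a l) * K i j =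
      ∑ k, ∑ l, a k * a l * K (f k) (f l) := by
    simp only [mul_assoc, ← Finset.mul_sum, sum_fiber_mul f a]
  simpa only [sum_fiber_mul f a, hvar] using hX fun i => ∑ k with f k = i, a k

theorem identDistrib (hX : IsCenteredGaussianFamily X K μ) (hY : IsCenteredGaussianFamily Y K ν) :
    IdentDistrib (fun ω i => X i ω) (fun ω i => Y i ω) μ ν where
  aemeasurable_fst := hX.aemeasurable
  aemeasurable_snd := hY.aemeasurable
  map_eq := by
    have := hX.isProbabilityMeasure
    have := hY.isProbabilityMeasure
    refine measure_pi_ext_of_map_sum_mul fun a => ?_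
    have hform : Measurable fun x : ι → ℝ => ∑ i, a i * x i := by fun_prop
    rw [AEMeasurable.map_map_of_aemeasurable hform.aemeasurable hX.aemeasurable,
      AEMeasurable.map_map_of_aemeasurable hform.aemeasurable hY.aemeasurable]
    exact ((hX a).identDistrib (hY a)).map_eq

end IsCenteredGaussianFamily

theorem val_succAbove {n : ℕ} (p : Fin (n + 1)) (i : Fin n) :
    (p.succAbove i : ℕ) = if (i : ℕ) < p then (i : ℕ) else i + 1 := by
  simp only [Fin.succAbove, Fin.lt_def, Fin.val_castSucc]
  split_ifs <;> rfl

theorem min_succAbove_castSucc_last {n : ℕ} {i j : Fin (n + 1)} (hij : i ≠ j) :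
    min ((Fin.last n).castSucc.succAbove i : ℕ) ((Fin.last n).castSucc.succAbove j) =
      min (i : ℕ) j := by
  simp only [val_succAbove, Fin.val_castSucc, Fin.val_last]
  split_ifs <;> omega

theorem stmt5_general {Ω : Type*} [MeasurableSpace Ω] {μ : Measure Ω} {X : ℕ → Ω → ℝ}
    {γ : ℕ → ℕ → ℝ} (c : ℝ) (b : ℕ → ℝ)
    (hγ : ∀ i j, 1 ≤ i → 1 ≤ j → γ i j = if i = j then c else b (min i j))
    (hX : ∀ n, IsCenteredGaussianFamily (fun i : Fin n => X (i + 1))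
      (fun i j => γ (i + 1) (j + 1)) μ) :
    IsCIDnat μ X := by
  intro n
  let skip : Fin (n + 1) → Fin (n + 2) := (Fin.last n).castSucc.succAbove
  have hcov (i j) : γ (skip i + 1) (skip j + 1) = γ (i + 1) (j + 1) := by
    rw [hγ _ _ (by omega) (by omega), hγ _ _ (by omega) (by omega)]
    rcases eq_or_ne i j with rfl | hij
    · simp only [if_true]
    · have hskip : skip i ≠ skip j := Fin.succAbove_right_injective.ne hij
      rw [if_neg (by omega), if_neg (by omega), Nat.add_min_add_right, Nat.add_min_add_right,
        min_succAbove_castSucc_last hij]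
  have hskip : IsCenteredGaussianFamily (fun i => X (skip i + 1))
      (fun i j => γ (i + 1) (j + 1)) μ := by
    simpa only [hcov] using (hX (n + 2)).comp skip
  have hfun : (fun ω (i : Fin (n + 1)) => X (skip i + 1) ω) =
      fun ω (i : Fin (n + 1)) => if (i : ℕ) < n then X (i + 1) ω else X (n + 2) ω := by
    funext ω i
    rcases i.is_le.lt_or_eq with hi | hi <;> simp [skip, val_succAbove, hi]
  rw [← hfun, (hskip.identDistrib (hX (n + 1))).map_eq]

/-- Let `0 < b 1 ≤ b 2 ≤ … < c` and let `(X n)` be a centered Gaussian sequence with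
`Cov (X i) (X j) = c` if `i = j` and `= min (b i) (b j)` if `i ≠ j` (expressed by: every
finite linear combination `∑ a i * X i` is Gaussian with mean `0` and variance `aᵀ Γ a`).
Then `(X n)` is c.i.d. -/
theorem stmt5 {Ω : Type*} {mΩ : MeasurableSpace Ω}
    (μ : Measure Ω) [IsProbabilityMeasure μ] (X : ℕ → Ω → ℝ)
    (hX : ∀ n, Measurable (X n))
    (b : ℕ → ℝ) (c : ℝ)
    (hb0 : 0 < b 1) (hbmono : ∀ i j, 1 ≤ i → i ≤ j → b i ≤ b j)
    (hbc : ∀ i, 1 ≤ i → b i < c)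
    (γ : ℕ → ℕ → ℝ)
    (hγ : ∀ i j, γ i j = if i = j then c else min (b i) (b j))
    (hGauss : ∀ (n : ℕ) (a : Fin n → ℝ),
      Measure.map (fun ω => ∑ i, a i * X ((i : ℕ) + 1) ω) μ =
        gaussianReal 0 (∑ i, ∑ j, a i * a j * γ ((i : ℕ) + 1) ((j : ℕ) + 1)).toNNReal) :
    IsCIDnat μ X := by
  refine stmt5_general c b (fun i j hi hj => ?_) fun n a => ⟨by fun_prop, hGauss n a⟩
  rw [hγ, MonotoneOn.map_min (s := Set.Ici 1) (fun i hi j _ => hbmono i j hi) hi hj]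
end

section
/- If (X_n) is G-c.i.d. and f : E → ℝ is measurable with E|f(X_1)| < ∞, then f(X_n) → V_f in the weak topology σ(L¹, L^∞), i.e., E[Z f(X_n)] → E[Z V_f] for every bounded random variable Z. -/
open MeasureTheory Filter

/-- `(X n)` (indexed from 1) is conditionally identically distributed with respect to `𝒢`. -/
def IsCID {Ω E : Type*} {mΩ : MeasurableSpace Ω} [MeasurableSpace E]
    (μ : Measure Ω) (𝒢 : Filtration ℕ mΩ) (X : ℕ → Ω → E) : Prop :=
  ∀ (f : E → ℝ), Measurable f → (∃ C, ∀ x, |f x| ≤ C) →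
    ∀ n k : ℕ, n < k →
      μ[(fun ω => f (X k ω)) | 𝒢 n] =ᵐ[μ] μ[(fun ω => f (X (n + 1) ω)) | 𝒢 n]

/-!
Write `Y n = f (X (n + 1))` and `𝒢∞ = ⨆ n, 𝒢 n`. Conditional expectation is self-adjoint and `Y n`
is `𝒢∞`-measurable, so that
`E[Z (Y n - E[Y n | 𝒢 n])] = E[(E[Z | 𝒢∞] - E[Z | 𝒢 n]) Y n]`.
By Lévy's upward theorem the first factor on the right is a bounded sequence tending to `0` in `L¹`,
and `Y` is uniformly integrable because it is identically distributed; hence the right-hand side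
tends to `0`. The conditional expectations `E[Y n | 𝒢 n]` inherit uniform integrability from `Y`,
so by Vitali's theorem they converge to `V` in `L¹`, and in particular weakly.
-/

open scoped ENNReal NNReal Topology

section UniformIntegrability

variable {Ω ι F : Type*} {mΩ : MeasurableSpace Ω} {μ : Measure Ω} [NormedAddCommGroup F]
  {p : ℝ≥0∞}

lemma exists_forall_meas_nnnorm_ge_le_of_eLpNorm_le {g : ι → Ω → F} {B δ : ℝ≥0∞}
    (hp : p ≠ 0) (hp' : p ≠ ∞) (hg : ∀ i, AEStronglyMeasurable (g i) μ) (hB : B ≠ ∞)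
    (hgB : ∀ i, eLpNorm (g i) p μ ≤ B) (hδ : δ ≠ 0) :
    ∃ C : ℝ≥0, ∀ i, μ {ω | C ≤ ‖g i ω‖₊} ≤ δ := by
  have hp₀ : 0 < p.toReal := ENNReal.toReal_pos hp hp'
  obtain ⟨r, hr, hrδ⟩ :=
    ENNReal.exists_nnreal_pos_mul_lt (ENNReal.rpow_ne_top_of_nonneg hp₀.le hB) hδ
  obtain ⟨C, hC, hCr⟩ : ∃ C : ℝ≥0, C ≠ 0 ∧ C⁻¹ ^ p.toReal = r :=
    ⟨(r ^ p.toReal⁻¹)⁻¹, inv_ne_zero (NNReal.rpow_pos hr).ne',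
      by rw [inv_inv, NNReal.rpow_inv_rpow hp₀.ne']⟩
  refine ⟨C, fun i => ?_⟩
  calc μ {ω | C ≤ ‖g i ω‖₊}
      = μ {ω | (C : ℝ≥0∞) ≤ ‖g i ω‖ₑ} := by simp only [enorm_eq_nnnorm, ENNReal.coe_le_coe]
    _ ≤ (C : ℝ≥0∞)⁻¹ ^ p.toReal * eLpNorm (g i) p μ ^ p.toReal :=
        meas_ge_le_mul_pow_eLpNorm_enorm μ hp hp' (hg i) (ENNReal.coe_ne_zero.2 hC) (by simp)
    _ = r * eLpNorm (g i) p μ ^ p.toReal := by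
        rw [← ENNReal.coe_inv hC, ← ENNReal.coe_rpow_of_nonneg _ hp₀.le, hCr]
    _ ≤ r * B ^ p.toReal := by gcongr; exact hgB i
    _ ≤ δ := hrδ.le

lemma uniformIntegrable_condExp [NormedSpace ℝ F] [CompleteSpace F] [IsFiniteMeasure μ]
    {Y : ι → Ω → F} (hp : 1 ≤ p) (hp' : p ≠ ∞) (hY : UniformIntegrable Y p μ)
    {m : ι → MeasurableSpace Ω} (hm : ∀ i, m i ≤ mΩ) :
    UniformIntegrable (fun i => μ[Y i | m i]) p μ := by
  refine uniformIntegrable_of hp hp' (fun i => integrable_condExp.aestronglyMeasurable)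
    fun ε hε => ?_
  obtain ⟨δ, hδ, hYδ⟩ := hY.2.1 hε
  obtain ⟨B, hB⟩ := hY.2.2
  obtain ⟨C, hC⟩ := exists_forall_meas_nnnorm_ge_le_of_eLpNorm_le (zero_lt_one.trans_le hp).ne' hp'
    (fun i => (integrable_condExp (m := m i) (f := Y i) (μ := μ)).aestronglyMeasurable)
    ENNReal.coe_ne_top (fun i => (eLpNorm_condExp_le_eLpNorm (Y i) hp).trans (hB i))
    (ENNReal.ofReal_pos.2 hδ).ne'
  refine ⟨C, fun i => ?_⟩
  have hs : MeasurableSet[m i] {ω | C ≤ ‖(μ[Y i | m i]) ω‖₊} :=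
    stronglyMeasurable_condExp.nnnorm.measurable measurableSet_Ici
  rw [← eLpNorm_congr_ae (condExp_indicator ((hY.memLp i).integrable hp) hs)]
  exact (eLpNorm_condExp_le_eLpNorm _ hp).trans (hYδ i _ (hm i _ hs) (hC i))

variable {𝕜 : Type*} [NormedRing 𝕜] [Module 𝕜 F] [IsBoundedSMul 𝕜 F]

lemma eLpNorm_smul_le_add_of_indicator_nnnorm_ge {u : Ω → 𝕜} {y : Ω → F} (hp : 1 ≤ p)
    (hu : AEStronglyMeasurable u μ) (hy : AEStronglyMeasurable y μ) (C : ℝ≥0) :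
    eLpNorm (u • y) p μ ≤
      eLpNorm u ∞ μ * eLpNorm ({ω | C ≤ ‖y ω‖₊}.indicator y) p μ + eLpNorm u p μ * C := by
  set s : Set Ω := {ω | C ≤ ‖y ω‖₊} with hs_def
  have hs : NullMeasurableSet s μ := hy.nnnorm.aemeasurable.nullMeasurable measurableSet_Ici
  have hy_s : AEStronglyMeasurable (s.indicator y) μ := hy.indicator₀ hs
  have hy_compl : AEStronglyMeasurable (sᶜ.indicator y) μ := hy.indicator₀ hs.compl
  have h_top : eLpNorm (sᶜ.indicator y) ∞ μ ≤ C := by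
    rw [eLpNorm_exponent_top]
    refine eLpNormEssSup_le_of_ae_nnnorm_bound (ae_of_all μ fun ω => ?_)
    by_cases hω : C ≤ ‖y ω‖₊
    · simp [hs_def, hω]
    · simpa [hs_def, hω] using (not_le.1 hω).le
  calc eLpNorm (u • y) p μ
      = eLpNorm (u • s.indicator y + u • sᶜ.indicator y) p μ := by
        rw [← smul_add, Set.indicator_self_add_compl]
    _ ≤ eLpNorm (u • s.indicator y) p μ + eLpNorm (u • sᶜ.indicator y) p μ :=
        eLpNorm_add_le (hu.smul hy_s) (hu.smul hy_compl) hp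
    _ ≤ eLpNorm u ∞ μ * eLpNorm (s.indicator y) p μ
          + eLpNorm u p μ * eLpNorm (sᶜ.indicator y) ∞ μ :=
        add_le_add (eLpNorm_smul_le_eLpNorm_top_mul_eLpNorm p hy_s u)
          (eLpNorm_smul_le_eLpNorm_mul_eLpNorm_top p _ hu)
    _ ≤ eLpNorm u ∞ μ * eLpNorm (s.indicator y) p μ + eLpNorm u p μ * C := by gcongr

lemma tendsto_eLpNorm_smul_of_uniformIntegrable {l : Filter ι} {U : ι → Ω → 𝕜}
    {Y : ι → Ω → F} {K : ℝ≥0∞} (hp : 1 ≤ p) (hp' : p ≠ ∞)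
    (hU : ∀ i, AEStronglyMeasurable (U i) μ) (hK : K ≠ ∞)
    (hUK : ∀ i, eLpNorm (U i) ∞ μ ≤ K) (hU₀ : Tendsto (fun i => eLpNorm (U i) p μ) l (𝓝 0))
    (hY : UniformIntegrable Y p μ) :
    Tendsto (fun i => eLpNorm (U i • Y i) p μ) l (𝓝 0) := by
  refine ENNReal.tendsto_nhds_zero.2 fun ε hε => ?_
  obtain ⟨η, hη, hηK⟩ := ENNReal.exists_nnreal_pos_mul_lt hK (ENNReal.half_pos hε.ne').ne'
  obtain ⟨C, hC⟩ := hY.spec (zero_lt_one.trans_le hp).ne' hp' (NNReal.coe_pos.2 hη)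
  have hUC : Tendsto (fun i => eLpNorm (U i) p μ * C) l (𝓝 0) := by
    simpa using ENNReal.Tendsto.mul_const hU₀ (Or.inr ENNReal.coe_ne_top)
  filter_upwards [ENNReal.tendsto_nhds_zero.1 hUC _ (ENNReal.half_pos hε.ne')] with i hi
  calc eLpNorm (U i • Y i) p μ
      ≤ eLpNorm (U i) ∞ μ * eLpNorm ({ω | C ≤ ‖Y i ω‖₊}.indicator (Y i)) p μ
          + eLpNorm (U i) p μ * C :=
        eLpNorm_smul_le_add_of_indicator_nnnorm_ge hp (hU i) (hY.1 i) C
    _ ≤ K * ENNReal.ofReal η + ε / 2 := by gcongr; exacts [hUK i, hC i]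
    _ = η * K + ε / 2 := by rw [ENNReal.ofReal_coe_nnreal, mul_comm]
    _ ≤ ε / 2 + ε / 2 := by gcongr
    _ = ε := ENNReal.add_halves ε

lemma integrable_smul_of_memLp {q : ℝ≥0∞} [p.HolderConjugate q] {Z : Ω → 𝕜} {Y : Ω → F}
    (hZ : MemLp Z p μ) (hY : MemLp Y q μ) : Integrable (fun ω => Z ω • Y ω) μ :=
  memLp_one_iff_integrable.1 (hY.smul hZ)

lemma tendsto_integral_smul_of_tendsto_eLpNorm_sub [NormedSpace ℝ F] {q : ℝ≥0∞}
    [p.HolderConjugate q] {l : Filter ι} {Z : Ω → 𝕜} {Y : ι → Ω → F} {V : Ω → F}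
    (hZ : MemLp Z p μ) (hY : ∀ i, MemLp (Y i) q μ) (hV : MemLp V q μ)
    (hYV : Tendsto (fun i => eLpNorm (Y i - V) q μ) l (𝓝 0)) :
    Tendsto (fun i => ∫ ω, Z ω • Y i ω ∂μ) l (𝓝 (∫ ω, Z ω • V ω ∂μ)) := by
  have hZYV : Tendsto (fun i => eLpNorm Z p μ * eLpNorm (Y i - V) q μ) l (𝓝 0) := by
    simpa using ENNReal.Tendsto.const_mul hYV (Or.inr hZ.eLpNorm_ne_top)
  refine tendsto_integral_of_L1' _ (integrable_smul_of_memLp hZ hV).1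
    (Eventually.of_forall fun i => integrable_smul_of_memLp hZ (hY i))
    (tendsto_of_tendsto_of_tendsto_of_le_of_le tendsto_const_nhds hZYV (fun _ => zero_le)
      fun i => ?_)
  calc eLpNorm (Z • Y i - Z • V) 1 μ
      = eLpNorm (Z • (Y i - V)) 1 μ := by rw [smul_sub]
    _ ≤ eLpNorm Z p μ * eLpNorm (Y i - V) q μ :=
        eLpNorm_smul_le_mul_eLpNorm ((hY i).sub hV).1 hZ.1

end UniformIntegrability

section ConditionalExpectation

variable {Ω F : Type*} {mΩ : MeasurableSpace Ω} {μ : Measure Ω} [IsFiniteMeasure μ]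
  [NormedAddCommGroup F] [NormedSpace ℝ F] [CompleteSpace F]

lemma integral_smul_condExp_eq_integral_condExp_smul {m : MeasurableSpace Ω} (hm : m ≤ mΩ)
    {p q : ℝ≥0∞} [p.HolderConjugate q] {Z : Ω → ℝ} {Y : Ω → F} (hZ : MemLp Z p μ)
    (hY : MemLp Y q μ) :
    ∫ ω, Z ω • (μ[Y | m]) ω ∂μ = ∫ ω, (μ[Z | m]) ω • Y ω ∂μ := by
  have hp : 1 ≤ p := ENNReal.HolderConjugate.one_le p q
  have hq : 1 ≤ q := ENNReal.HolderConjugate.one_le q p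
  have hZY' : Integrable (Z • μ[Y | m]) μ := integrable_smul_of_memLp hZ (hY.condExp hq)
  have hZ'Y : Integrable (μ[Z | m] • Y) μ := integrable_smul_of_memLp (hZ.condExp hp) hY
  calc ∫ ω, Z ω • (μ[Y | m]) ω ∂μ
      = ∫ ω, (μ[Z • μ[Y | m] | m]) ω ∂μ := (integral_condExp hm).symm
    _ = ∫ ω, (μ[Z | m]) ω • (μ[Y | m]) ω ∂μ :=
        integral_congr_ae (condExp_smul_of_aestronglyMeasurable_right (hZ.integrable hp) hZY'
          stronglyMeasurable_condExp.aestronglyMeasurable)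
    _ = ∫ ω, (μ[μ[Z | m] • Y | m]) ω ∂μ :=
        (integral_congr_ae (condExp_smul_of_aestronglyMeasurable_left
          stronglyMeasurable_condExp.aestronglyMeasurable hZ'Y (hY.integrable hq))).symm
    _ = ∫ ω, (μ[Z | m]) ω • Y ω ∂μ := integral_condExp hm

lemma integral_smul_sub_condExp_eq {m₁ m₂ : MeasurableSpace Ω} (hm₁ : m₁ ≤ mΩ) (hm₂ : m₂ ≤ mΩ)
    {p q : ℝ≥0∞} [p.HolderConjugate q] {Z : Ω → ℝ} {Y : Ω → F} (hZ : MemLp Z p μ)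
    (hY : MemLp Y q μ) (hYm : AEStronglyMeasurable[m₂] Y μ) :
    ∫ ω, Z ω • (Y ω - (μ[Y | m₁]) ω) ∂μ =
      ∫ ω, ((μ[Z | m₂]) ω - (μ[Z | m₁]) ω) • Y ω ∂μ := by
  have hp : 1 ≤ p := ENNReal.HolderConjugate.one_le p q
  have hq : 1 ≤ q := ENNReal.HolderConjugate.one_le q p
  have hZY : ∫ ω, Z ω • Y ω ∂μ = ∫ ω, (μ[Z | m₂]) ω • Y ω ∂μ := by
    rw [← integral_smul_condExp_eq_integral_condExp_smul hm₂ hZ hY]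
    refine integral_congr_ae ?_
    filter_upwards [condExp_of_aestronglyMeasurable' hm₂ hYm (hY.integrable hq)] with ω hω
    rw [hω]
  simp_rw [smul_sub, sub_smul]
  rw [integral_sub (integrable_smul_of_memLp hZ hY)
      (integrable_smul_of_memLp hZ (hY.condExp hq)),
    integral_sub (integrable_smul_of_memLp (hZ.condExp hp) hY)
      (integrable_smul_of_memLp (hZ.condExp hp) hY),
    hZY, integral_smul_condExp_eq_integral_condExp_smul hm₁ hZ hY]

variable {𝒢 : Filtration ℕ mΩ} {Y : ℕ → Ω → F} {Z : Ω → ℝ}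

lemma tendsto_integral_smul_sub_condExp (hY : UniformIntegrable Y 1 μ)
    (hYm : ∀ n, AEStronglyMeasurable[⨆ k, 𝒢 k] (Y n) μ) (hZ : MemLp Z ∞ μ) :
    Tendsto (fun n => ∫ ω, Z ω • (Y n ω - (μ[Y n | 𝒢 n]) ω) ∂μ) atTop (𝓝 0) := by
  set U : ℕ → Ω → ℝ := fun n => μ[Z | ⨆ k, 𝒢 k] - μ[Z | 𝒢 n] with hU_def
  have hU (n : ℕ) : MemLp (U n) ∞ μ := (hZ.condExp le_top).sub (hZ.condExp le_top)
  have hU_bdd (n : ℕ) : eLpNorm (U n) ∞ μ ≤ eLpNorm Z ∞ μ + eLpNorm Z ∞ μ :=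
    (eLpNorm_sub_le integrable_condExp.1 integrable_condExp.1 le_top).trans
      (add_le_add (eLpNorm_condExp_le_eLpNorm Z le_top) (eLpNorm_condExp_le_eLpNorm Z le_top))
  have hU_zero : Tendsto (fun n => eLpNorm (U n) 1 μ) atTop (𝓝 0) := by
    simpa only [hU_def, eLpNorm_sub_comm] using tendsto_eLpNorm_condExp (ℱ := 𝒢) (μ := μ) Z
  have hUY : Tendsto (fun n => eLpNorm (U n • Y n) 1 μ) atTop (𝓝 0) :=
    tendsto_eLpNorm_smul_of_uniformIntegrable le_rfl ENNReal.one_ne_top (fun n => (hU n).1)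
      (ENNReal.add_ne_top.2 ⟨hZ.eLpNorm_ne_top, hZ.eLpNorm_ne_top⟩) hU_bdd hU_zero hY
  have h_int : Tendsto (fun n => ∫ ω, (U n • Y n) ω ∂μ) atTop (𝓝 0) := by
    simpa using tendsto_integral_of_L1' (F := fun n => U n • Y n) 0 aestronglyMeasurable_zero
      (Eventually.of_forall fun n => integrable_smul_of_memLp (hU n) (hY.memLp n))
      (by simpa only [sub_zero] using hUY)
  exact h_int.congr fun n => (integral_smul_sub_condExp_eq (𝒢.le n) (iSup_le 𝒢.le) hZ
    (hY.memLp n) (hYm n)).symm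

lemma tendsto_integral_smul_condExp {m : ℕ → MeasurableSpace Ω} (hm : ∀ n, m n ≤ mΩ) {V : Ω → F}
    (hY : UniformIntegrable Y 1 μ)
    (hV : ∀ᵐ ω ∂μ, Tendsto (fun n => (μ[Y n | m n]) ω) atTop (𝓝 (V ω))) (hZ : MemLp Z ∞ μ) :
    Tendsto (fun n => ∫ ω, Z ω • (μ[Y n | m n]) ω ∂μ) atTop (𝓝 (∫ ω, Z ω • V ω ∂μ)) := by
  have hM : UniformIntegrable (fun n => μ[Y n | m n]) 1 μ :=
    uniformIntegrable_condExp le_rfl ENNReal.one_ne_top hY hm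
  have hV₁ : MemLp V 1 μ := hM.memLp_of_ae_tendsto hV
  exact tendsto_integral_smul_of_tendsto_eLpNorm_sub hZ hM.memLp hV₁
    (tendsto_Lp_finite_of_tendsto_ae le_rfl ENNReal.one_ne_top hM.1 hV₁ hM.2.1 hV)

theorem stmt9_general {V : Ω → F} (hY : UniformIntegrable Y 1 μ)
    (hYm : ∀ n, AEStronglyMeasurable[⨆ k, 𝒢 k] (Y n) μ)
    (hV : ∀ᵐ ω ∂μ, Tendsto (fun n => (μ[Y n | 𝒢 n]) ω) atTop (𝓝 (V ω))) (hZ : MemLp Z ∞ μ) :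
    Tendsto (fun n => ∫ ω, Z ω • Y n ω ∂μ) atTop (𝓝 (∫ ω, Z ω • V ω ∂μ)) := by
  have h := (tendsto_integral_smul_sub_condExp hY hYm hZ).add
    (tendsto_integral_smul_condExp 𝒢.le hY hV hZ)
  rw [zero_add] at h
  refine h.congr fun n => ?_
  have hYn : MemLp (Y n) 1 μ := hY.memLp n
  have hMn : MemLp (μ[Y n | 𝒢 n]) 1 μ := hYn.condExp le_rfl
  simp_rw [smul_sub]
  rw [integral_sub (integrable_smul_of_memLp hZ hYn) (integrable_smul_of_memLp hZ hMn),
    sub_add_cancel]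

end ConditionalExpectation

namespace IsCID

variable {Ω E : Type*} {mΩ : MeasurableSpace Ω} [MeasurableSpace E] {μ : Measure Ω}
  [IsFiniteMeasure μ] {𝒢 : Filtration ℕ mΩ} {X : ℕ → Ω → E}

lemma identDistrib (hcid : IsCID μ 𝒢 X) (hX : ∀ n, 1 ≤ n → AEMeasurable (X n) μ) {n : ℕ}
    (hn : 1 ≤ n) : ProbabilityTheory.IdentDistrib (X n) (X 1) μ μ := by
  refine ⟨hX n hn, hX 1 le_rfl, ?_⟩
  ext s hs
  have integral_indicator_comp (k : ℕ) (hk : 1 ≤ k) :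
      ∫ ω, s.indicator (1 : E → ℝ) (X k ω) ∂μ = (μ.map (X k)).real s := by
    rw [← integral_map (hX k hk) (measurable_one.indicator hs).aestronglyMeasurable,
      integral_indicator_one hs]
  have h := integral_congr_ae (hcid (s.indicator 1) (measurable_one.indicator hs)
    ⟨1, fun x => by by_cases hx : x ∈ s <;> simp [hx]⟩ 0 n hn)
  rw [integral_condExp (𝒢.le 0), integral_condExp (𝒢.le 0), integral_indicator_comp n hn,
    integral_indicator_comp 1 le_rfl] at h
  exact (measureReal_eq_measureReal_iff).1 h

lemma uniformIntegrable_comp {F : Type*} [NormedAddCommGroup F] [MeasurableSpace F] [BorelSpace F]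
    {p : ℝ≥0∞} (hcid : IsCID μ 𝒢 X) (hX : ∀ n, 1 ≤ n → AEMeasurable (X n) μ) (hp : 1 ≤ p)
    (hp' : p ≠ ∞) {f : E → F} (hf : Measurable f) (hf₁ : MemLp (fun ω => f (X 1 ω)) p μ) :
    UniformIntegrable (fun n ω => f (X (n + 1) ω)) p μ :=
  ProbabilityTheory.MemLp.uniformIntegrable_of_identDistrib (j := 0) hp hp' hf₁
    fun n => (hcid.identDistrib hX (Nat.le_add_left 1 n)).comp hf

end IsCID

/-- If `(X n)` is `𝒢`-c.i.d. and `E|f (X 1)| < ∞`, then `f (X n) → V_f` in `σ(L¹, L^∞)`: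
`E[Z · f (X n)] → E[Z · V_f]` for every bounded (measurable) random variable `Z`. -/
theorem stmt9 {Ω E : Type*} {mΩ : MeasurableSpace Ω} [MeasurableSpace E]
    (μ : Measure Ω) [IsProbabilityMeasure μ] (𝒢 : Filtration ℕ mΩ) (X : ℕ → Ω → E)
    (hadp : ∀ n, 1 ≤ n → Measurable[𝒢 n] (X n))
    (hcid : IsCID μ 𝒢 X)
    (f : E → ℝ) (hf : Measurable f) (hint : Integrable (fun ω => f (X 1 ω)) μ)
    (V : Ω → ℝ) (hVint : Integrable V μ)
    (hV : ∀ᵐ ω ∂μ, Tendsto (fun n => (μ[(fun ω' => f (X (n + 1) ω')) | 𝒢 n]) ω)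
      atTop (nhds (V ω))) :
    ∀ Z : Ω → ℝ, Measurable Z → (∃ C, ∀ ω, |Z ω| ≤ C) →
      Tendsto (fun n => ∫ ω, Z ω * f (X (n + 1) ω) ∂μ) atTop (nhds (∫ ω, Z ω * V ω ∂μ)) := by
  rintro Z hZ ⟨C, hC⟩
  have hX (n : ℕ) (hn : 1 ≤ n) : AEMeasurable (X n) μ :=
    ((hadp n hn).mono (𝒢.le n) le_rfl).aemeasurable
  have hY : UniformIntegrable (fun n ω => f (X (n + 1) ω)) 1 μ :=
    hcid.uniformIntegrable_comp hX le_rfl ENNReal.one_ne_top hf (memLp_one_iff_integrable.2 hint)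
  have hYm (n : ℕ) : AEStronglyMeasurable[⨆ k, 𝒢 k] (fun ω => f (X (n + 1) ω)) μ :=
    ((hf.comp (hadp (n + 1) n.succ_pos)).mono
      (le_iSup (fun k => (𝒢 k : MeasurableSpace Ω)) (n + 1)) le_rfl).aestronglyMeasurable
  exact stmt9_general hY hYm hV (memLp_top_of_bound hZ.aestronglyMeasurable C (ae_of_all μ hC))
end

section
/- Strong law of large numbers for c.i.d. sequences: if (X_n) is c.i.d. and f : E → ℝ is measurable with E|f(X_1)| < ∞, then (1/n) Σ_{i=1}^n f(X_i) → V_f almost surely and in L¹. -/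
open MeasureTheory Filter

/-!
Replace `Y k = f (X k)` by its truncation at level `k + 1`; by Borel–Cantelli this alters only
finitely many terms. The truncated variables `Z k` minus their predictive means are martingale
differences with `∑ E[Z k ^ 2] / (k + 1) ^ 2 < ∞`, so their averages vanish by `L²`-martingale
convergence and Kronecker's lemma. For a c.i.d. sequence the predictive means `E[h (X n) | 𝒢 n]`
form a convergent martingale whenever `h (X 0)` is integrable. Applied to the tail of `f` beyond a
fixed level `c`, this bounds the eventual size of the predictive means of the moving tails by a
random variable of integral at most the level-`c` tail expectation, which tends to `0` as `c → ∞`;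
hence truncation does not change the limit of the predictive means, and Cesàro averaging gives
almost sure convergence. Convergence in `L¹` follows since averages of identically distributed
integrable variables are uniformly integrable.
-/

open ProbabilityTheory Topology Finset Asymptotics

section Kronecker

theorem sum_range_smul_eq_smul_sum_sub {R M : Type*} [Ring R] [AddCommGroup M] [Module R M]
    (b : ℕ → R) (x : ℕ → M) (n : ℕ) :
    ∑ k ∈ range n, b (k + 1) • x k =
      b n • ∑ k ∈ range n, x k - ∑ k ∈ range n, (b (k + 1) - b k) • ∑ i ∈ range k, x i := by
  induction n with
  | zero => simp
  | succ n ih =>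
    simp only [sum_range_succ _ n, ih]
    simp only [smul_add, sub_smul]
    abel

variable {F : Type*} [NormedAddCommGroup F] [NormedSpace ℝ F] {b : ℕ → ℝ} {x : ℕ → F} {l : F}

theorem tendsto_inv_smul_sum_sub_smul (hb : Monotone b) (hb_top : Tendsto b atTop atTop)
    (hx : Tendsto x atTop (𝓝 l)) :
    Tendsto (fun n => (b n)⁻¹ • ∑ k ∈ range n, (b (k + 1) - b k) • x k) atTop (𝓝 l) := by
  have hsum_top : Tendsto (fun n => ∑ k ∈ range n, (b (k + 1) - b k)) atTop atTop := by
    simp only [sum_range_sub]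
    exact tendsto_atTop_add_const_right _ (-b 0) hb_top
  have hsum_isBigO : (fun n => ∑ k ∈ range n, (b (k + 1) - b k)) =O[atTop] b := by
    simp only [sum_range_sub]
    exact (isBigO_refl b _).sub
      (isLittleO_const_left.2 (.inr (tendsto_norm_atTop_atTop.comp hb_top))).isBigO
  have hterm : (fun k => (b (k + 1) - b k) • (x k - l)) =o[atTop] fun k => b (k + 1) - b k := by
    simpa only [smul_eq_mul, mul_one] using
      (isBigO_refl (fun k => b (k + 1) - b k) atTop).smul_isLittleO
      ((isLittleO_one_iff ℝ).2 (tendsto_sub_nhds_zero_iff.2 hx))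
  have hcentered : Tendsto (fun n => (b n)⁻¹ • ∑ k ∈ range n, (b (k + 1) - b k) • (x k - l))
      atTop (𝓝 0) :=
    ((hterm.sum_range (fun k => sub_nonneg.2 (hb k.le_succ)) hsum_top).trans_isBigO
      hsum_isBigO).tendsto_inv_smul_nhds_zero
  have hratio : Tendsto (fun n => (1 - (b n)⁻¹ * b 0) • l) atTop (𝓝 l) := by
    simpa using ((tendsto_const_nhds (x := (1 : ℝ))).sub
      ((tendsto_inv_atTop_zero.comp hb_top).mul_const (b 0))).smul_const l
  refine (zero_add l ▸ hcentered.add hratio).congr' ?_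
  filter_upwards [hb_top.eventually_ne_atTop 0] with n hn
  have hsplit : ∑ k ∈ range n, (b (k + 1) - b k) • (x k - l) =
      ∑ k ∈ range n, (b (k + 1) - b k) • x k - (b n - b 0) • l := by
    simp only [smul_sub, sum_sub_distrib (f := fun k => (b (k + 1) - b k) • x k), ← sum_smul,
      sum_range_sub]
  rw [hsplit, smul_sub, smul_smul, mul_sub, inv_mul_cancel₀ hn, sub_add_cancel]

theorem tendsto_inv_smul_sum_smul_zero (hb : Monotone b) (hb_top : Tendsto b atTop atTop)
    (hx : Tendsto (fun n => ∑ k ∈ range n, x k) atTop (𝓝 l)) :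
    Tendsto (fun n => (b n)⁻¹ • ∑ k ∈ range n, b (k + 1) • x k) atTop (𝓝 0) := by
  have h := hx.sub (tendsto_inv_smul_sum_sub_smul hb hb_top hx)
  rw [sub_self] at h
  refine h.congr' ?_
  filter_upwards [hb_top.eventually_ne_atTop 0] with n hn
  rw [sum_range_smul_eq_smul_sum_sub, smul_sub, inv_smul_smul₀ hn]

end Kronecker

section SquareIntegrableMartingale

variable {Ω : Type*} {mΩ : MeasurableSpace Ω} {μ : Measure Ω}

theorem integral_sub_condExp_sq_le [IsFiniteMeasure μ] {m : MeasurableSpace Ω} (hm : m ≤ mΩ)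
    {Z : Ω → ℝ} (hZ : MemLp Z 2 μ) :
    ∫ ω, (Z ω - (μ[Z | m]) ω) ^ 2 ∂μ ≤ ∫ ω, Z ω ^ 2 ∂μ := by
  have h := integral_mono_ae integrable_condVar integrable_condExp (condVar_ae_le_condExp_sq hm hZ)
  rwa [condVar, integral_condExp hm, integral_condExp hm] at h

theorem eLpNorm_one_le_ofReal_integral_sq_add [IsFiniteMeasure μ] {f : Ω → ℝ}
    (hf : MemLp f 2 μ) :
    eLpNorm f 1 μ ≤ ENNReal.ofReal (∫ ω, f ω ^ 2 ∂μ + μ.real Set.univ) := by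
  have hint : Integrable f μ := hf.integrable one_le_two
  rw [eLpNorm_one_eq_lintegral_enorm, ← ofReal_integral_norm_eq_lintegral_enorm hint]
  refine ENNReal.ofReal_le_ofReal ?_
  calc ∫ ω, ‖f ω‖ ∂μ ≤ ∫ ω, (f ω ^ 2 + 1) ∂μ := by
        refine integral_mono hint.norm (hf.integrable_sq.add (integrable_const _)) fun ω => ?_
        have := two_mul_le_add_sq ‖f ω‖ 1
        simp only [Real.norm_eq_abs, sq_abs] at this ⊢
        nlinarith [abs_nonneg (f ω)]
    _ = ∫ ω, f ω ^ 2 ∂μ + μ.real Set.univ := by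
        simp [integral_add hf.integrable_sq (integrable_const _)]

variable [IsFiniteMeasure μ] {𝒢 : Filtration ℕ mΩ} {M : ℕ → Ω → ℝ}

theorem integral_mul_eq_integral_sq_of_martingale (hM : Martingale M 𝒢 μ)
    (hL2 : ∀ n, MemLp (M n) 2 μ) {i j : ℕ} (hij : i ≤ j) :
    ∫ ω, M i ω * M j ω ∂μ = ∫ ω, M i ω ^ 2 ∂μ := by
  have hpull := condExp_mul_of_stronglyMeasurable_left (hM.stronglyMeasurable i)
    ((hL2 i).integrable_mul (hL2 j)) (hM.integrable j)
  calc ∫ ω, (M i * M j) ω ∂μ = ∫ ω, (μ[M i * M j | 𝒢 i]) ω ∂μ := (integral_condExp (𝒢.le i)).symm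
    _ = ∫ ω, M i ω ^ 2 ∂μ := by
      refine integral_congr_ae ?_
      filter_upwards [hpull, hM.condExp_ae_eq hij] with ω h_mul h_proj
      rw [h_mul, Pi.mul_apply, h_proj, sq]

theorem integral_sq_eq_add_integral_sub_sq_of_martingale (hM : Martingale M 𝒢 μ)
    (hL2 : ∀ n, MemLp (M n) 2 μ) {i j : ℕ} (hij : i ≤ j) :
    ∫ ω, M j ω ^ 2 ∂μ = ∫ ω, M i ω ^ 2 ∂μ + ∫ ω, (M j ω - M i ω) ^ 2 ∂μ := by
  have hmul : Integrable (fun ω => M i ω * M j ω) μ := (hL2 i).integrable_mul (hL2 j)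
  have hexpand : ∫ ω, (M j ω - M i ω) ^ 2 ∂μ =
      ∫ ω, M j ω ^ 2 ∂μ - 2 * ∫ ω, M i ω * M j ω ∂μ + ∫ ω, M i ω ^ 2 ∂μ := by
    have hsub : Integrable (fun ω => M j ω ^ 2 - 2 * (M i ω * M j ω)) μ :=
      (hL2 j).integrable_sq.sub (hmul.const_mul 2)
    calc ∫ ω, (M j ω - M i ω) ^ 2 ∂μ
        = ∫ ω, (M j ω ^ 2 - 2 * (M i ω * M j ω) + M i ω ^ 2) ∂μ := by congr with ω; ring
      _ = _ := by
        rw [integral_add hsub (hL2 i).integrable_sq,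
          integral_sub (hL2 j).integrable_sq (hmul.const_mul 2), integral_const_mul]
  rw [hexpand, integral_mul_eq_integral_sq_of_martingale hM hL2 hij]
  ring

theorem ae_exists_tendsto_of_martingale_of_summable_integral_sub_sq (hM : Martingale M 𝒢 μ)
    (hL2 : ∀ n, MemLp (M n) 2 μ) (hsum : Summable fun n => ∫ ω, (M (n + 1) ω - M n ω) ^ 2 ∂μ) :
    ∀ᵐ ω ∂μ, ∃ l, Tendsto (fun n => M n ω) atTop (𝓝 l) := by
  have hsq (n : ℕ) : ∫ ω, M n ω ^ 2 ∂μ ≤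
      ∫ ω, M 0 ω ^ 2 ∂μ + ∑' n, ∫ ω, (M (n + 1) ω - M n ω) ^ 2 ∂μ := by
    have htelescope : ∑ k ∈ range n, ∫ ω, (M (k + 1) ω - M k ω) ^ 2 ∂μ =
        ∫ ω, M n ω ^ 2 ∂μ - ∫ ω, M 0 ω ^ 2 ∂μ := by
      rw [← sum_range_sub (fun k => ∫ ω, M k ω ^ 2 ∂μ)]
      refine sum_congr rfl fun k _ => ?_
      rw [integral_sq_eq_add_integral_sub_sq_of_martingale hM hL2 k.le_succ, add_sub_cancel_left]
    have := hsum.sum_le_tsum (range n) fun k _ => integral_nonneg fun ω => sq_nonneg _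
    linarith
  refine hM.submartingale.exists_ae_tendsto_of_bdd fun n =>
    (eLpNorm_one_le_ofReal_integral_sq_add (hL2 n)).trans
      (ENNReal.ofReal_le_ofReal (add_le_add_left (hsq n) _))

end SquareIntegrableMartingale

section MartingaleDifference

variable {Ω : Type*} {mΩ : MeasurableSpace Ω} {μ : Measure Ω} [IsFiniteMeasure μ]
  {𝒢 : Filtration ℕ mΩ}

theorem martingale_sum_smul_sub_condExp {F : Type*} [NormedAddCommGroup F] [NormedSpace ℝ F]
    [CompleteSpace F] {Z : ℕ → Ω → F} (hZ : ∀ k, StronglyMeasurable[𝒢 (k + 1)] (Z k))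
    (hint : ∀ k, Integrable (Z k) μ) (c : ℕ → ℝ) :
    Martingale (fun n => ∑ k ∈ range n, c k • (Z k - μ[Z k | 𝒢 k])) 𝒢 μ := by
  have hint_sub (k : ℕ) : Integrable (Z k - μ[Z k | 𝒢 k]) μ := (hint k).sub integrable_condExp
  refine martingale_of_condExp_sub_eq_zero_nat (fun n => ?_)
    (fun n => integrable_finsetSum' _ fun k _ => (hint_sub k).smul (c k)) fun n => ?_
  · refine stronglyMeasurable_sum _ fun k hk => StronglyMeasurable.const_smul ?_ (c k)
    exact ((hZ k).mono (𝒢.mono (mem_range.1 hk))).sub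
      (stronglyMeasurable_condExp.mono (𝒢.mono (mem_range.1 hk).le))
  · rw [sum_range_succ_sub_sum]
    have hproj : μ[μ[Z n | 𝒢 n] | 𝒢 n] = μ[Z n | 𝒢 n] :=
      condExp_of_stronglyMeasurable (𝒢.le n) stronglyMeasurable_condExp integrable_condExp
    filter_upwards [condExp_smul (μ := μ) (c n) (Z n - μ[Z n | 𝒢 n]) (𝒢 n),
      condExp_sub (hint n) integrable_condExp (𝒢 n)] with ω h_smul h_sub
    rw [h_smul, Pi.smul_apply, h_sub, hproj, sub_self, Pi.zero_apply, smul_zero]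

variable {Z : ℕ → Ω → ℝ}

theorem ae_exists_tendsto_sum_smul_sub_condExp
    (hZ : ∀ k, StronglyMeasurable[𝒢 (k + 1)] (Z k)) (hL2 : ∀ k, MemLp (Z k) 2 μ) {c : ℕ → ℝ}
    (hsum : Summable fun k => c k ^ 2 * ∫ ω, Z k ω ^ 2 ∂μ) :
    ∀ᵐ ω ∂μ, ∃ l, Tendsto (fun n => ∑ k ∈ range n, c k • (Z k ω - (μ[Z k | 𝒢 k]) ω))
      atTop (𝓝 l) := by
  have hM := martingale_sum_smul_sub_condExp hZ (fun k => (hL2 k).integrable one_le_two) c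
  have hM2 (n : ℕ) : MemLp (∑ k ∈ range n, c k • (Z k - μ[Z k | 𝒢 k])) 2 μ :=
    memLp_finsetSum' _ fun k _ => ((hL2 k).sub ((hL2 k).condExp one_le_two)).const_smul (c k)
  have hincr : Summable fun n => ∫ ω, ((∑ k ∈ range (n + 1), c k • (Z k - μ[Z k | 𝒢 k])) ω -
      (∑ k ∈ range n, c k • (Z k - μ[Z k | 𝒢 k])) ω) ^ 2 ∂μ := by
    refine hsum.of_nonneg_of_le (fun n => integral_nonneg fun ω => sq_nonneg _) fun n => ?_
    simp only [sum_range_succ, Pi.add_apply, add_sub_cancel_left, Pi.smul_apply, Pi.sub_apply,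
      smul_eq_mul, mul_pow, integral_const_mul]
    exact mul_le_mul_of_nonneg_left (integral_sub_condExp_sq_le (𝒢.le n) (hL2 n)) (sq_nonneg _)
  filter_upwards [ae_exists_tendsto_of_martingale_of_summable_integral_sub_sq hM hM2 hincr]
    with ω hω
  simpa only [Finset.sum_apply, Pi.smul_apply, Pi.sub_apply] using hω

theorem ae_tendsto_inv_smul_sum_sub_condExp_zero {b : ℕ → ℝ} (hb : Monotone b)
    (hb_top : Tendsto b atTop atTop) (hb_ne : ∀ k, b (k + 1) ≠ 0)
    (hZ : ∀ k, StronglyMeasurable[𝒢 (k + 1)] (Z k)) (hL2 : ∀ k, MemLp (Z k) 2 μ)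
    (hsum : Summable fun k => (b (k + 1))⁻¹ ^ 2 * ∫ ω, Z k ω ^ 2 ∂μ) :
    ∀ᵐ ω ∂μ, Tendsto (fun n => (b n)⁻¹ • ∑ k ∈ range n, (Z k ω - (μ[Z k | 𝒢 k]) ω))
      atTop (𝓝 0) := by
  filter_upwards [ae_exists_tendsto_sum_smul_sub_condExp hZ hL2 hsum] with ω ⟨l, hl⟩
  simpa only [smul_inv_smul₀ (hb_ne _)] using tendsto_inv_smul_sum_smul_zero hb hb_top hl

end MartingaleDifference

section Truncation

theorem abs_truncation_le_truncation_abs {α : Type*} (f : α → ℝ) (A : ℝ) (x : α) :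
    |truncation f A x| ≤ truncation (fun y => |f y|) A x := by
  by_cases hx : f x ∈ Set.Ioc (-A) A
  · have hmem : |f x| ∈ Set.Ioc (-A) A :=
      ⟨by linarith [abs_nonneg (f x), hx.1, hx.2], abs_le.2 ⟨hx.1.le, hx.2⟩⟩
    simp only [truncation, Function.comp_apply, Set.indicator_of_mem hx,
      Set.indicator_of_mem hmem, id, le_refl]
  · simpa only [truncation, Function.comp_apply, Set.indicator_of_notMem hx, abs_zero] using
      truncation_nonneg A (abs_nonneg (f x))

theorem antitone_abs_sub_truncation {α : Type*} (f : α → ℝ) :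
    Antitone fun (A : ℝ) x => |f x - truncation f A x| := by
  intro A B hAB x
  by_cases hx : f x ∈ Set.Ioc (-A) A
  · have hmem : f x ∈ Set.Ioc (-B) B := Set.Ioc_subset_Ioc (neg_le_neg hAB) hAB hx
    simp [truncation, hx, hmem]
  · by_cases hx' : f x ∈ Set.Ioc (-B) B <;> simp [truncation, hx, hx']

variable {Ω : Type*} {mΩ : MeasurableSpace Ω} {μ : Measure Ω} [IsProbabilityMeasure μ]

theorem summable_inv_sq_mul_integral_truncation_sq {Y : Ω → ℝ} (hY : Integrable Y μ) :
    Summable fun j : ℕ => ((j : ℝ) ^ 2)⁻¹ * ∫ ω, truncation Y j ω ^ 2 ∂μ := by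
  let _ : MeasureSpace Ω := ⟨μ⟩
  have : IsProbabilityMeasure (volume : Measure Ω) := ‹IsProbabilityMeasure μ›
  have habs : Summable fun j : ℕ => ((j : ℝ) ^ 2)⁻¹ * ∫ ω, truncation (fun ω => |Y ω|) j ω ^ 2 ∂μ :=
    summable_of_sum_range_le
      (fun j => mul_nonneg (by positivity) (integral_nonneg fun ω => sq_nonneg _))
      (sum_variance_truncation_le hY.abs fun ω => abs_nonneg _)
  refine habs.of_nonneg_of_le
    (fun j => mul_nonneg (by positivity) (integral_nonneg fun ω => sq_nonneg _)) fun j => ?_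
  refine mul_le_mul_of_nonneg_left (integral_mono hY.1.memLp_truncation.integrable_sq
    hY.abs.1.memLp_truncation.integrable_sq fun ω => ?_) (by positivity)
  exact sq_le_sq' (neg_le_of_abs_le (abs_truncation_le_truncation_abs Y j ω))
    (le_of_abs_le (abs_truncation_le_truncation_abs Y j ω))

theorem ae_eventually_truncation_eq_self {Y : ℕ → Ω → ℝ} (hY : Integrable (Y 0) μ)
    (hident : ∀ k, IdentDistrib (Y k) (Y 0) μ μ) :
    ∀ᵐ ω ∂μ, ∀ᶠ k : ℕ in atTop, truncation (Y k) (k + 1 : ℕ) ω = Y k ω := by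
  let _ : MeasureSpace Ω := ⟨μ⟩
  have : IsProbabilityMeasure (volume : Measure Ω) := ‹IsProbabilityMeasure μ›
  have htail (k : ℕ) : μ {ω | |Y k ω| ∈ Set.Ioi (k : ℝ)} = μ {ω | |Y 0 ω| ∈ Set.Ioi (k : ℝ)} :=
    ((hident k).comp measurable_norm).measure_mem_eq measurableSet_Ioi
  have hsum : ∑' k : ℕ, μ {ω | |Y k ω| ∈ Set.Ioi (k : ℝ)} ≠ ⊤ := by
    simp only [htail]
    exact (tsum_prob_mem_Ioi_lt_top hY.abs fun ω => abs_nonneg _).ne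
  filter_upwards [ae_eventually_notMem hsum] with ω hω
  filter_upwards [hω] with k hk
  refine truncation_eq_self ((not_lt.1 hk).trans_lt ?_)
  exact_mod_cast k.lt_succ_self

end Truncation

section Convergence

theorem tendsto_integral_norm_sub_zero_of_uniformIntegrable {Ω F : Type*} {mΩ : MeasurableSpace Ω}
    [NormedAddCommGroup F] {μ : Measure Ω} [IsFiniteMeasure μ] {f : ℕ → Ω → F} {g : Ω → F}
    (hf : UniformIntegrable f 1 μ) (hfg : ∀ᵐ ω ∂μ, Tendsto (fun n => f n ω) atTop (𝓝 (g ω))) :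
    Tendsto (fun n => ∫ ω, ‖f n ω - g ω‖ ∂μ) atTop (𝓝 0) := by
  have hg : MemLp g 1 μ := hf.memLp_of_ae_tendsto hfg
  have hLp : Tendsto (fun n => eLpNorm (f n - g) 1 μ) atTop (𝓝 0) :=
    tendsto_Lp_finite_of_tendsto_ae le_rfl ENNReal.one_ne_top hf.aestronglyMeasurable hg
      hf.unifIntegrable hfg
  refine ((ENNReal.tendsto_toReal ENNReal.zero_ne_top).comp hLp).congr fun n => ?_
  rw [Function.comp_apply, eLpNorm_one_eq_lintegral_enorm,
    ← integral_norm_eq_lintegral_enorm ((hf.aestronglyMeasurable n).sub hg.1)]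
  rfl

theorem ae_tendsto_zero_of_lintegral_limsup_ofReal_eq_zero {Ω : Type*} {mΩ : MeasurableSpace Ω}
    {μ : Measure Ω} {f : ℕ → Ω → ℝ} (hf : ∀ n, Measurable (f n)) (hnonneg : ∀ n, 0 ≤ᵐ[μ] f n)
    (hlimsup : ∫⁻ ω, limsup (fun n => ENNReal.ofReal (f n ω)) atTop ∂μ = 0) :
    ∀ᵐ ω ∂μ, Tendsto (fun n => f n ω) atTop (𝓝 0) := by
  rw [lintegral_eq_zero_iff (.limsup fun n => (hf n).ennreal_ofReal)] at hlimsup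
  filter_upwards [hlimsup, ae_all_iff.2 hnonneg] with ω h_limsup h_nonneg
  have hofReal := tendsto_of_le_liminf_of_limsup_le bot_le h_limsup.le
  exact ((ENNReal.tendsto_toReal ENNReal.zero_ne_top).comp hofReal).congr fun n =>
    ENNReal.toReal_ofReal (h_nonneg n)

end Convergence

/-- The sequence `X` is conditionally identically distributed relative to the filtration `𝒢`.
Indices start at `0`, so that `X n` is revealed at time `n + 1`. Given `𝒢 n`, all of `X n`,
`X (n + 1)`, ... should have the same conditional law; by the tower property it suffices to compare
the first two, and regular conditional laws are avoided by asking that these two have the same law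
under the restriction of `μ` to each event of `𝒢 n`. -/
structure IsCID_s10 {Ω E : Type*} {mΩ : MeasurableSpace Ω} [MeasurableSpace E] (X : ℕ → Ω → E)
    (𝒢 : Filtration ℕ mΩ) (μ : Measure Ω) : Prop where
  measurable (n : ℕ) : Measurable[𝒢 (n + 1)] (X n)
  identDistrib_restrict (n : ℕ) {s : Set Ω} (hs : MeasurableSet[𝒢 n] s) :
    IdentDistrib (X (n + 1)) (X n) (μ.restrict s) (μ.restrict s)

namespace IsCID_s10

variable {Ω E : Type*} {mΩ : MeasurableSpace Ω} [MeasurableSpace E] {X : ℕ → Ω → E}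
  {𝒢 : Filtration ℕ mΩ} {μ : Measure Ω}

theorem comp {E' : Type*} [MeasurableSpace E'] (hX : IsCID_s10 X 𝒢 μ) {g : E → E'}
    (hg : Measurable g) : IsCID_s10 (fun n ω => g (X n ω)) 𝒢 μ where
  measurable n := hg.comp (hX.measurable n)
  identDistrib_restrict n _ hs := (hX.identDistrib_restrict n hs).comp hg

theorem identDistrib_s10 (hX : IsCID_s10 X 𝒢 μ) (n : ℕ) : IdentDistrib (X n) (X 0) μ μ := by
  induction n with
  | zero => exact .refl ((hX.measurable 0).mono (𝒢.le _) le_rfl).aemeasurable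
  | succ n ih =>
    have hsucc := hX.identDistrib_restrict n (s := Set.univ) MeasurableSet.univ
    rw [Measure.restrict_univ] at hsucc
    exact hsucc.trans ih

section Banach

variable {F : Type*} [NormedAddCommGroup F] [MeasurableSpace F] [BorelSpace F] {Y : ℕ → Ω → F}

theorem integrable (hY : IsCID_s10 Y 𝒢 μ) (hint : Integrable (Y 0) μ) (n : ℕ) : Integrable (Y n) μ :=
  (hY.identDistrib_s10 n).integrable_iff.2 hint

variable [NormedSpace ℝ F] [CompleteSpace F] [IsFiniteMeasure μ]

theorem condExp_succ (hY : IsCID_s10 Y 𝒢 μ) (hint : Integrable (Y 0) μ) (n : ℕ) :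
    μ[Y (n + 1) | 𝒢 n] =ᵐ[μ] μ[Y n | 𝒢 n] := by
  refine (ae_eq_condExp_of_forall_setIntegral_eq (𝒢.le n) (hY.integrable hint (n + 1))
    (fun s _ _ => integrable_condExp.integrableOn) (fun s hs _ => ?_)
    stronglyMeasurable_condExp.aestronglyMeasurable).symm
  rw [setIntegral_condExp (𝒢.le n) (hY.integrable hint n) hs]
  exact (hY.identDistrib_restrict n hs).integral_eq.symm

theorem martingale_condExp (hY : IsCID_s10 Y 𝒢 μ) (hint : Integrable (Y 0) μ) :
    Martingale (fun n => μ[Y n | 𝒢 n]) 𝒢 μ :=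
  martingale_nat (fun _ => stronglyMeasurable_condExp) (fun _ => integrable_condExp) fun n =>
    (hY.condExp_succ hint n).symm.trans
      (condExp_condExp_of_le (𝒢.mono n.le_succ) (𝒢.le (n + 1))).symm

end Banach

section Real

variable [IsFiniteMeasure μ] {Y : ℕ → Ω → ℝ}

theorem ae_exists_tendsto_condExp (hY : IsCID_s10 Y 𝒢 μ) (hint : Integrable (Y 0) μ) :
    ∀ᵐ ω ∂μ, ∃ l, Tendsto (fun n => (μ[Y n | 𝒢 n]) ω) atTop (𝓝 l) := by
  refine (hY.martingale_condExp hint).submartingale.exists_ae_tendsto_of_bdd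
    (R := (eLpNorm (Y 0) 1 μ).toNNReal) fun n => ?_
  rw [ENNReal.coe_toNNReal (memLp_one_iff_integrable.2 hint).eLpNorm_ne_top,
    ← (hY.identDistrib_s10 n).eLpNorm_eq]
  exact eLpNorm_condExp_le_eLpNorm _ le_rfl

theorem lintegral_limsup_condExp_le (hY : IsCID_s10 Y 𝒢 μ) (hint : Integrable (Y 0) μ)
    (hnonneg : 0 ≤ᵐ[μ] Y 0) :
    ∫⁻ ω, limsup (fun n => ENNReal.ofReal ((μ[Y n | 𝒢 n]) ω)) atTop ∂μ ≤
      ENNReal.ofReal (∫ ω, Y 0 ω ∂μ) := by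
  have hint_condExp (n : ℕ) : ∫⁻ ω, ENNReal.ofReal ((μ[Y n | 𝒢 n]) ω) ∂μ =
      ENNReal.ofReal (∫ ω, Y 0 ω ∂μ) := by
    rw [← ofReal_integral_eq_lintegral_ofReal integrable_condExp
      (condExp_nonneg ((hY.identDistrib_s10 n).symm.ae_mem_snd measurableSet_Ici hnonneg)),
      integral_condExp (𝒢.le n), (hY.identDistrib_s10 n).integral_eq]
  calc ∫⁻ ω, limsup (fun n => ENNReal.ofReal ((μ[Y n | 𝒢 n]) ω)) atTop ∂μ
      = ∫⁻ ω, liminf (fun n => ENNReal.ofReal ((μ[Y n | 𝒢 n]) ω)) atTop ∂μ := by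
        refine lintegral_congr_ae ?_
        filter_upwards [hY.ae_exists_tendsto_condExp hint] with ω ⟨l, hl⟩
        have hl' := ENNReal.tendsto_ofReal hl
        rw [hl'.limsup_eq, hl'.liminf_eq]
    _ ≤ liminf (fun n => ∫⁻ ω, ENNReal.ofReal ((μ[Y n | 𝒢 n]) ω) ∂μ) atTop :=
        lintegral_liminf_le fun n =>
          (stronglyMeasurable_condExp.mono (𝒢.le n)).measurable.ennreal_ofReal
    _ = ENNReal.ofReal (∫ ω, Y 0 ω ∂μ) := by simp only [hint_condExp, liminf_const]

end Real

theorem ae_tendsto_condExp_zero_of_antitone [IsFiniteMeasure μ] (hX : IsCID_s10 X 𝒢 μ)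
    {h : ℕ → E → ℝ} (hmeas : ∀ c, Measurable (h c)) (hanti : Antitone h) (hnonneg : ∀ c, 0 ≤ h c)
    (hlim : ∀ x, Tendsto (fun c => h c x) atTop (𝓝 0))
    (hint : Integrable (fun ω => h 0 (X 0 ω)) μ) :
    ∀ᵐ ω ∂μ, Tendsto (fun n => (μ[fun ω' => h n (X n ω') | 𝒢 n]) ω) atTop (𝓝 0) := by
  have hle_zero (c : ℕ) (x : E) : h c x ≤ h 0 x := hanti c.zero_le x
  have hint_zero (c : ℕ) : Integrable (fun ω => h c (X 0 ω)) μ :=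
    hint.mono' ((hX.comp (hmeas c)).identDistrib_s10 0).aestronglyMeasurable_fst
      (ae_of_all _ fun ω => (Real.norm_of_nonneg (hnonneg c _)).trans_le (hle_zero c _))
  have hint_all (c n : ℕ) : Integrable (fun ω => h c (X n ω)) μ :=
    (hX.comp (hmeas c)).integrable (hint_zero c) n
  have hle (c : ℕ) : ∫⁻ ω, limsup (fun n =>
      ENNReal.ofReal ((μ[fun ω' => h n (X n ω') | 𝒢 n]) ω)) atTop ∂μ ≤
      ENNReal.ofReal (∫ ω, h c (X 0 ω) ∂μ) := by
    refine (lintegral_mono_ae ?_).trans ((hX.comp (hmeas c)).lintegral_limsup_condExp_le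
      (hint_zero c) (ae_of_all _ fun ω => hnonneg c _))
    have hmono : ∀ᵐ ω ∂μ, ∀ n ≥ c,
        (μ[fun ω' => h n (X n ω') | 𝒢 n]) ω ≤ (μ[fun ω' => h c (X n ω') | 𝒢 n]) ω := by
      simp only [ae_all_iff]
      exact fun n hn => condExp_mono (hint_all n n) (hint_all c n) (ae_of_all _ fun ω => hanti hn _)
    filter_upwards [hmono] with ω hω
    refine limsup_le_limsup ?_
    filter_upwards [eventually_ge_atTop c] with n hn using ENNReal.ofReal_le_ofReal (hω n hn)
  have hlim_integral : Tendsto (fun c => ENNReal.ofReal (∫ ω, h c (X 0 ω) ∂μ)) atTop (𝓝 0) := by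
    simpa only [integral_zero, ENNReal.ofReal_zero] using
      ENNReal.tendsto_ofReal (integral_tendsto_of_tendsto_of_antitone hint_zero
        (integrable_const 0) (ae_of_all _ fun ω _ _ hcd => hanti hcd _)
        (ae_of_all _ fun ω => hlim _))
  refine ae_tendsto_zero_of_lintegral_limsup_ofReal_eq_zero
    (fun n => (stronglyMeasurable_condExp.mono (𝒢.le n)).measurable)
    (fun n => condExp_nonneg (ae_of_all _ fun ω => hnonneg n _))
    (nonpos_iff_eq_zero.1 (ge_of_tendsto' hlim_integral hle))

theorem ae_tendsto_condExp_sub_truncation_zero [IsFiniteMeasure μ] {Y : ℕ → Ω → ℝ}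
    (hY : IsCID_s10 Y 𝒢 μ) (hint : Integrable (Y 0) μ) :
    ∀ᵐ ω ∂μ, Tendsto (fun n => (μ[Y n - truncation (Y n) (n + 1 : ℕ) | 𝒢 n]) ω) atTop (𝓝 0) := by
  have hlim (y : ℝ) : Tendsto (fun n : ℕ => |y - truncation id (n + 1 : ℕ) y|) atTop (𝓝 0) := by
    refine tendsto_const_nhds.congr' ?_
    filter_upwards [(tendsto_natCast_atTop_atTop.comp (tendsto_add_atTop_nat 1)).eventually_gt_atTop
      |y|] with n hn
    have htrunc : truncation id (n + 1 : ℕ) y = y := truncation_eq_self hn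
    rw [htrunc, sub_self, abs_zero]
  have htail : ∀ᵐ ω ∂μ, Tendsto (fun n =>
      (μ[fun ω' => |Y n ω' - truncation id (n + 1 : ℕ) (Y n ω')| | 𝒢 n]) ω) atTop (𝓝 0) :=
    hY.ae_tendsto_condExp_zero_of_antitone
      (h := fun n y => |y - truncation id (n + 1 : ℕ) y|)
      (fun n => (measurable_id.sub (measurable_id.indicator measurableSet_Ioc)).abs)
      (fun c d hcd => antitone_abs_sub_truncation id (by exact_mod_cast Nat.succ_le_succ hcd))
      (fun n y => abs_nonneg _) hlim (hint.sub hint.1.integrable_truncation).abs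
  have hle : ∀ᵐ ω ∂μ, ∀ n, ‖(μ[Y n - truncation (Y n) (n + 1 : ℕ) | 𝒢 n]) ω‖ ≤
      (μ[fun ω' => |Y n ω' - truncation id (n + 1 : ℕ) (Y n ω')| | 𝒢 n]) ω :=
    ae_all_iff.2 fun n => norm_condExp_le _
  filter_upwards [htail, hle] with ω hω hω_le
  exact squeeze_zero_norm hω_le hω

theorem ae_tendsto_condExp_truncation [IsFiniteMeasure μ] {Y : ℕ → Ω → ℝ} (hY : IsCID_s10 Y 𝒢 μ)
    (hint : Integrable (Y 0) μ) {V : Ω → ℝ}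
    (hV : ∀ᵐ ω ∂μ, Tendsto (fun n => (μ[Y n | 𝒢 n]) ω) atTop (𝓝 (V ω))) :
    ∀ᵐ ω ∂μ, Tendsto (fun n => (μ[truncation (Y n) (n + 1 : ℕ) | 𝒢 n]) ω) atTop (𝓝 (V ω)) := by
  have hsub : ∀ᵐ ω ∂μ, ∀ n, (μ[Y n - truncation (Y n) (n + 1 : ℕ) | 𝒢 n]) ω =
      (μ[Y n | 𝒢 n]) ω - (μ[truncation (Y n) (n + 1 : ℕ) | 𝒢 n]) ω :=
    ae_all_iff.2 fun n => condExp_sub (hY.integrable hint n)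
      (hY.integrable hint n).1.integrable_truncation _
  filter_upwards [hsub, hV, hY.ae_tendsto_condExp_sub_truncation_zero hint] with ω h_sub h_V h_tail
  simpa only [h_sub, sub_sub_cancel, sub_zero] using h_V.sub h_tail

theorem ae_tendsto_average [IsProbabilityMeasure μ] {Y : ℕ → Ω → ℝ} (hY : IsCID_s10 Y 𝒢 μ)
    (hint : Integrable (Y 0) μ) {V : Ω → ℝ}
    (hV : ∀ᵐ ω ∂μ, Tendsto (fun n => (μ[Y n | 𝒢 n]) ω) atTop (𝓝 (V ω))) :
    ∀ᵐ ω ∂μ, Tendsto (fun n : ℕ => (∑ k ∈ range n, Y k ω) / n) atTop (𝓝 (V ω)) := by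
  set Z : ℕ → Ω → ℝ := fun k => truncation (Y k) (k + 1 : ℕ)
  have hsum : Summable fun k : ℕ => ((k + 1 : ℕ) : ℝ)⁻¹ ^ 2 * ∫ ω, Z k ω ^ 2 ∂μ := by
    have hmoment (k : ℕ) : ∫ ω, Z k ω ^ 2 ∂μ = ∫ ω, truncation (Y 0) (k + 1 : ℕ) ω ^ 2 ∂μ :=
      ((hY.identDistrib_s10 k).truncation.comp (measurable_id.pow_const 2)).integral_eq
    simpa only [inv_pow, hmoment] using
      (summable_nat_add_iff 1).2 (summable_inv_sq_mul_integral_truncation_sq hint)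
  have hnoise : ∀ᵐ ω ∂μ, Tendsto (fun n : ℕ => (n : ℝ)⁻¹ • ∑ k ∈ range n,
      (Z k ω - (μ[Z k | 𝒢 k]) ω)) atTop (𝓝 0) :=
    ae_tendsto_inv_smul_sum_sub_condExp_zero Nat.mono_cast tendsto_natCast_atTop_atTop
      (fun k => Nat.cast_ne_zero.2 k.succ_ne_zero)
      (fun k => ((measurable_id.indicator measurableSet_Ioc).comp
        (hY.measurable k)).stronglyMeasurable)
      (fun k => (hY.integrable hint k).1.memLp_truncation) hsum
  filter_upwards [hnoise, hY.ae_tendsto_condExp_truncation hint hV,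
    ae_eventually_truncation_eq_self hint hY.identDistrib_s10] with ω h_noise h_pred h_trunc
  have hdiff : Tendsto (fun k => Y k ω - Z k ω) atTop (𝓝 0) :=
    tendsto_const_nhds.congr' (h_trunc.mono fun k hk => (sub_eq_zero.2 hk.symm).symm)
  have hlim := (h_noise.add h_pred.cesaro).add hdiff.cesaro
  rw [zero_add, add_zero] at hlim
  refine hlim.congr fun n => ?_
  rw [smul_eq_mul, ← mul_add, ← mul_add, ← sum_add_distrib, ← sum_add_distrib, div_eq_inv_mul]
  congr 1
  exact sum_congr rfl fun k _ => by ring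

theorem tendsto_integral_abs_average_sub [IsFiniteMeasure μ] {Y : ℕ → Ω → ℝ} (hY : IsCID_s10 Y 𝒢 μ)
    (hint : Integrable (Y 0) μ) {V : Ω → ℝ}
    (hV : ∀ᵐ ω ∂μ, Tendsto (fun n : ℕ => (∑ k ∈ range n, Y k ω) / n) atTop (𝓝 (V ω))) :
    Tendsto (fun n : ℕ => ∫ ω, |(∑ k ∈ range n, Y k ω) / n - V ω| ∂μ) atTop (𝓝 0) := by
  have hui : UniformIntegrable Y 1 μ :=
    MemLp.uniformIntegrable_of_identDistrib le_rfl ENNReal.one_ne_top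
      (memLp_one_iff_integrable.2 hint) hY.identDistrib_s10
  have haverage (n : ℕ) (ω : Ω) :
      ((∑ k ∈ range n, Y k) / (n : Ω → ℝ)) ω = (∑ k ∈ range n, Y k ω) / n := by
    rw [Pi.div_apply, Finset.sum_apply, Pi.natCast_apply]
  simpa only [haverage, Real.norm_eq_abs] using
    tendsto_integral_norm_sub_zero_of_uniformIntegrable (uniformIntegrable_average_real le_rfl hui)
      (hV.mono fun ω hω => hω.congr fun n => (haverage n ω).symm)

end IsCID_s10

section NaturalFiltration

variable {Ω E : Type*} {mΩ : MeasurableSpace Ω} [MeasurableSpace E]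

theorem iSup_comap_Icc_one_eq_comap_pi (X : ℕ → Ω → E) (n : ℕ) :
    ⨆ i ∈ Set.Icc 1 n, MeasurableSpace.comap (X i) inferInstance =
      MeasurableSpace.comap (fun ω (i : Fin n) => X (i + 1) ω) inferInstance := by
  refine le_antisymm (iSup₂_le fun i hi => ?_) ?_
  · have hcoord : X i = (fun p : Fin n → E => p ⟨i - 1, Nat.sub_one_lt_of_le hi.1 hi.2⟩) ∘
        fun ω (i : Fin n) => X (i + 1) ω := by
      funext ω
      simp only [Function.comp_apply, Nat.sub_add_cancel hi.1]
    rw [hcoord, ← MeasurableSpace.comap_comp]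
    exact MeasurableSpace.comap_mono (measurable_pi_apply _).comap_le
  · rw [MeasurableSpace.pi, MeasurableSpace.comap_iSup]
    refine iSup_le fun i => ?_
    rw [MeasurableSpace.comap_comp]
    exact le_iSup₂_of_le (f := fun j (_ : j ∈ Set.Icc 1 n) =>
      MeasurableSpace.comap (X j) inferInstance) (i + 1) ⟨by omega, by omega⟩ le_rfl

variable {X : ℕ → Ω → E} {μ : Measure Ω}

theorem IsCIDnat.identDistrib_restrict_preimage (hcid : IsCIDnat μ X)
    (hX : ∀ n, Measurable (X (n + 1))) (n : ℕ) {B : Set (Fin n → E)} (hB : MeasurableSet B) :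
    IdentDistrib (X (n + 2)) (X (n + 1))
      (μ.restrict ((fun ω (i : Fin n) => X (i + 1) ω) ⁻¹' B))
      (μ.restrict ((fun ω (i : Fin n) => X (i + 1) ω) ⁻¹' B)) := by
  refine ⟨(hX (n + 1)).aemeasurable, (hX n).aemeasurable, Measure.ext fun C hC => ?_⟩
  have hcylinder : MeasurableSet {p : Fin (n + 1) → E | Fin.init p ∈ B ∧ p (Fin.last n) ∈ C} :=
    ((measurable_pi_lambda _ fun i => measurable_pi_apply i.castSucc) hB).inter
      (measurable_pi_apply (Fin.last n) hC)
  have hswap : Measurable fun ω (i : Fin (n + 1)) =>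
      if (i : ℕ) < n then X (i + 1) ω else X (n + 2) ω := by
    refine measurable_pi_lambda _ fun i => ?_
    split_ifs
    exacts [hX i, hX (n + 1)]
  have hlaw := congrArg (fun ν => ν {p : Fin (n + 1) → E | Fin.init p ∈ B ∧ p (Fin.last n) ∈ C})
    (hcid n)
  simp only [Measure.map_apply hswap hcylinder,
    Measure.map_apply (measurable_pi_lambda _ fun i : Fin (n + 1) => hX i) hcylinder] at hlaw
  rw [Measure.map_apply (hX (n + 1)) hC, Measure.map_apply (hX n) hC,
    Measure.restrict_apply (hX (n + 1) hC), Measure.restrict_apply (hX n hC), Set.inter_comm,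
    Set.inter_comm (X (n + 1) ⁻¹' C)]
  simpa [Fin.init_def, Set.preimage, Set.inter_def] using hlaw

theorem IsCIDnat.isCID (hcid : IsCIDnat μ X) (hX : ∀ n, Measurable (X (n + 1)))
    {𝒢 : Filtration ℕ mΩ}
    (h𝒢 : ∀ n, 𝒢 n = ⨆ i ∈ Set.Icc 1 n, MeasurableSpace.comap (X i) inferInstance) :
    IsCID_s10 (fun n => X (n + 1)) 𝒢 μ where
  measurable n := by
    rw [measurable_iff_comap_le, h𝒢]
    exact le_iSup₂_of_le (f := fun j (_ : j ∈ Set.Icc 1 (n + 1)) =>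
      MeasurableSpace.comap (X j) inferInstance) (n + 1) ⟨by omega, le_rfl⟩ le_rfl
  identDistrib_restrict n s hs := by
    rw [h𝒢, iSup_comap_Icc_one_eq_comap_pi] at hs
    obtain ⟨B, hB, rfl⟩ := hs
    exact hcid.identDistrib_restrict_preimage hX n hB

end NaturalFiltration

theorem stmt10_general {Ω E : Type*} {mΩ : MeasurableSpace Ω} [MeasurableSpace E]
    (μ : Measure Ω) [IsProbabilityMeasure μ] (X : ℕ → Ω → E) (𝒢 : Filtration ℕ mΩ)
    (hX : IsCID_s10 (fun n => X (n + 1)) 𝒢 μ)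
    (f : E → ℝ) (hf : Measurable f) (hint : Integrable (fun ω => f (X 1 ω)) μ) (V : Ω → ℝ)
    (hV : ∀ᵐ ω ∂μ, Tendsto (fun n => (μ[(fun ω' => f (X (n + 1) ω')) | 𝒢 n]) ω)
      atTop (𝓝 (V ω))) :
    (∀ᵐ ω ∂μ, Tendsto (fun n => (∑ i ∈ Finset.Icc 1 n, f (X i ω)) / (n : ℝ)) atTop (𝓝 (V ω))) ∧
    Tendsto (fun n => ∫ ω, |(∑ i ∈ Finset.Icc 1 n, f (X i ω)) / (n : ℝ) - V ω| ∂μ)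
      atTop (𝓝 0) := by
  have hshift (n : ℕ) (ω : Ω) :
      ∑ i ∈ Finset.Icc 1 n, f (X i ω) = ∑ k ∈ range n, f (X (k + 1) ω) := by
    rw [range_eq_Ico, sum_Ico_add' (fun i => f (X i ω)) 0 n 1]
    rfl
  simp only [hshift]
  have hlim := (hX.comp hf).ae_tendsto_average hint hV
  exact ⟨hlim, (hX.comp hf).tendsto_integral_abs_average_sub hint hlim⟩

/-- SLLN for c.i.d. sequences: if `(X n)` is c.i.d. and `E|f (X 1)| < ∞`, then
`(1/n) ∑_{i=1}^n f (X i) → V_f` a.s. and in `L¹`, where `V_f` is the a.s. limit of the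
martingale `E[f (X (n+1)) | σ(X 1, …, X n)]`. -/
theorem stmt10 {Ω E : Type*} {mΩ : MeasurableSpace Ω} [MeasurableSpace E]
    (μ : Measure Ω) [IsProbabilityMeasure μ] (X : ℕ → Ω → E)
    (hX : ∀ n, Measurable (X n))
    (hcid : IsCIDnat μ X)
    (𝒢 : Filtration ℕ mΩ)
    (h𝒢 : ∀ n, 𝒢 n = ⨆ i ∈ Set.Icc 1 n, MeasurableSpace.comap (X i) inferInstance)
    (f : E → ℝ) (hf : Measurable f) (hint : Integrable (fun ω => f (X 1 ω)) μ)
    (V : Ω → ℝ)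
    (hV : ∀ᵐ ω ∂μ, Tendsto (fun n => (μ[(fun ω' => f (X (n + 1) ω')) | 𝒢 n]) ω)
      atTop (nhds (V ω))) :
    (∀ᵐ ω ∂μ, Tendsto (fun n => (∑ i ∈ Finset.Icc 1 n, f (X i ω)) / (n : ℝ))
      atTop (nhds (V ω))) ∧
    Tendsto (fun n => ∫ ω, |(∑ i ∈ Finset.Icc 1 n, f (X i ω)) / (n : ℝ) - V ω| ∂μ)
      atTop (nhds 0) :=
  stmt10_general μ X 𝒢 (hcid.isCID (fun n => hX (n + 1)) h𝒢) f hf hint V hV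
end

section
/- If for every event H in the shift-invariant σ-field I of (X_n) with P(H) > 0 the sequence (X_n) is c.i.d. under P(·|H), then (X_n) is exchangeable. -/
open MeasureTheory ProbabilityTheory Filter

/-- `(X n)` (indexed from 1) is exchangeable. -/
def IsExchangeable {Ω E : Type*} {mΩ : MeasurableSpace Ω} [MeasurableSpace E]
    (μ : Measure Ω) (X : ℕ → Ω → E) : Prop :=
  ∀ (n : ℕ) (σ : Equiv.Perm (Fin n)),
    Measure.map (fun ω (i : Fin n) => X ((σ i : ℕ) + 1) ω) μ
      = Measure.map (fun ω (i : Fin n) => X ((i : ℕ) + 1) ω) μ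

/-!
Write `Y n = X (n + 1)`, let `I` be the shift-invariant σ-algebra, and fix a measurable set `s`.
The conditional probabilities of `{Y k ∈ s}` given `Y 0, …, Y (k - 1)` form a bounded martingale,
so they converge a.s., hence so do their averages. The averages of the martingale differences
`1_{Y k ∈ s} - P(Y k ∈ s | Y 0, …, Y (k - 1))` tend to `0`: dividing the `k`-th difference by
`k + 1` gives the increments of an `L²`-bounded martingale, and Kronecker's lemma applies. So the
visits of `Y` to `s` have an asymptotic frequency `V s`, which is `I`-measurable.

The hypothesis says that, for `G` in the past of `Y n`, the conditional probability
`P(G ∩ {Y k ∈ s} | I)` does not depend on `k ≥ n`. Averaging over `k` replaces the indicator of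
`{Y k ∈ s}` by `V s`, so `P(G ∩ {Y n ∈ s} | I) = V s * P(G | I)`. By induction
`P(Y 0 ∈ s₀, …, Y (n - 1) ∈ sₙ₋₁ | I) = V s₀ * ⋯ * V sₙ₋₁`, which is symmetric in the sets.
-/

open Finset Topology

section Kronecker

variable {F : Type*} [NormedAddCommGroup F] [NormedSpace ℝ F]

lemma tendsto_average_zero_of_tendsto_sum_inv_smul {a : ℕ → F} {c : F}
    (h : Tendsto (fun n ↦ ∑ k ∈ range n, (k + 1 : ℝ)⁻¹ • a k) atTop (𝓝 c)) :
    Tendsto (fun n : ℕ ↦ (n : ℝ)⁻¹ • ∑ k ∈ range n, a k) atTop (𝓝 0) := by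
  set S : ℕ → F := fun n ↦ ∑ k ∈ range n, (k + 1 : ℝ)⁻¹ • a k with hS
  have abel (n : ℕ) : ∑ k ∈ range n, a k = (n : ℝ) • S n - ∑ k ∈ range n, S k := by
    induction n with
    | zero => simp
    | succ n ih =>
      have hsucc : ((n + 1 : ℕ) : ℝ) • S (n + 1) = (n + 1 : ℝ) • S n + a n := by
        simp only [hS]
        rw [sum_range_succ, smul_add, Nat.cast_succ, smul_inv_smul₀ (by positivity)]
      rw [sum_range_succ, ih, sum_range_succ, hsucc]
      module
  have hsub : Tendsto (fun n : ℕ ↦ S n - (n : ℝ)⁻¹ • ∑ k ∈ range n, S k) atTop (𝓝 0) := by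
    simpa using h.sub h.cesaro_smul
  refine hsub.congr' ?_
  filter_upwards [eventually_ne_atTop 0] with n hn
  rw [abel, smul_sub, inv_smul_smul₀ (Nat.cast_ne_zero.2 hn)]

end Kronecker

section MartingaleDifference

variable {Ω : Type*} {mΩ : MeasurableSpace Ω} {μ : Measure Ω} {ℱ : Filtration ℕ mΩ}

lemma eLpNorm_one_le_of_integral_sq_le [IsFiniteMeasure μ] {f : Ω → ℝ} (hf : MemLp f 2 μ) {C : ℝ}
    (hC : ∫ ω, f ω ^ 2 ∂μ ≤ C) : eLpNorm f 1 μ ≤ (μ.real Set.univ + C).toNNReal := by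
  have hfi : Integrable f μ := hf.integrable one_le_two
  rw [eLpNorm_one_eq_lintegral_enorm, ← ofReal_integral_norm_eq_lintegral_enorm hfi]
  refine ENNReal.ofReal_le_ofReal ?_
  calc ∫ ω, ‖f ω‖ ∂μ ≤ ∫ ω, (1 + f ω ^ 2) ∂μ := by
        refine integral_mono hfi.norm ((integrable_const 1).add hf.integrable_sq) fun ω ↦ ?_
        have := sq_abs (f ω)
        simp only [Real.norm_eq_abs]
        nlinarith [sq_nonneg (|f ω| - 1)]
    _ = μ.real Set.univ + ∫ ω, f ω ^ 2 ∂μ := by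
        rw [integral_add (integrable_const 1) hf.integrable_sq, integral_const, smul_eq_mul,
          mul_one]
    _ ≤ μ.real Set.univ + C := by gcongr

lemma ae_exists_tendsto_of_integral_sq_le [IsFiniteMeasure μ] {M : ℕ → Ω → ℝ}
    (hM : Martingale M ℱ μ) (hL2 : ∀ n, MemLp (M n) 2 μ) {C : ℝ}
    (hC : ∀ n, ∫ ω, M n ω ^ 2 ∂μ ≤ C) :
    ∀ᵐ ω ∂μ, ∃ c, Tendsto (fun n ↦ M n ω) atTop (𝓝 c) :=
  hM.submartingale.exists_ae_tendsto_of_bdd fun n ↦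
    eLpNorm_one_le_of_integral_sq_le (hL2 n) (hC n)

lemma integral_mul_eq_zero_of_condExp_eq_zero {m : MeasurableSpace Ω} (hm : m ≤ mΩ)
    [SigmaFinite (μ.trim hm)] {f g : Ω → ℝ} (hf : StronglyMeasurable[m] f) (hg : Integrable g μ)
    (hfg : Integrable (f * g) μ) (hg0 : μ[g | m] =ᵐ[μ] 0) : ∫ ω, f ω * g ω ∂μ = 0 := by
  have hprod : μ[f * g | m] =ᵐ[μ] 0 := by
    filter_upwards [condExp_mul_of_stronglyMeasurable_left hf hfg hg, hg0] with ω hmul hzero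
    rw [hmul, Pi.mul_apply, hzero, Pi.zero_apply, mul_zero]
  calc ∫ ω, f ω * g ω ∂μ = ∫ ω, (μ[f * g | m]) ω ∂μ := (integral_condExp hm).symm
    _ = 0 := integral_eq_zero_of_ae hprod

lemma integral_sq_add_of_condExp_eq_zero [IsFiniteMeasure μ] {m : MeasurableSpace Ω}
    (hm : m ≤ mΩ) {f g : Ω → ℝ} (hfm : StronglyMeasurable[m] f) (hf : MemLp f 2 μ)
    (hg : MemLp g 2 μ) (hg0 : μ[g | m] =ᵐ[μ] 0) :
    ∫ ω, (f ω + g ω) ^ 2 ∂μ = ∫ ω, f ω ^ 2 ∂μ + ∫ ω, g ω ^ 2 ∂μ := by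
  have hfg : Integrable (fun ω ↦ 2 * (f ω * g ω)) μ := (hf.integrable_mul hg).const_mul 2
  have hsq : Integrable (fun ω ↦ f ω ^ 2 + g ω ^ 2) μ := hf.integrable_sq.add hg.integrable_sq
  have hcross : ∫ ω, f ω * g ω ∂μ = 0 :=
    integral_mul_eq_zero_of_condExp_eq_zero hm hfm (hg.integrable one_le_two)
      (hf.integrable_mul hg) hg0
  calc ∫ ω, (f ω + g ω) ^ 2 ∂μ
      = ∫ ω, (f ω ^ 2 + g ω ^ 2 + 2 * (f ω * g ω)) ∂μ := by congr with ω; ring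
    _ = ∫ ω, f ω ^ 2 ∂μ + ∫ ω, g ω ^ 2 ∂μ + 2 * ∫ ω, f ω * g ω ∂μ := by
        rw [integral_add hsq hfg, integral_add hf.integrable_sq hg.integrable_sq,
          integral_const_mul]
    _ = ∫ ω, f ω ^ 2 ∂μ + ∫ ω, g ω ^ 2 ∂μ := by rw [hcross, mul_zero, add_zero]

lemma condExp_sub_condExp_ae_eq_zero {m : MeasurableSpace Ω} (hm : m ≤ mΩ)
    [SigmaFinite (μ.trim hm)] {f : Ω → ℝ} (hf : Integrable f μ) :
    μ[f - μ[f | m] | m] =ᵐ[μ] 0 := by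
  have hsub := condExp_sub hf (integrable_condExp (f := f) (m := m)) m
  rwa [condExp_of_stronglyMeasurable hm stronglyMeasurable_condExp integrable_condExp,
    sub_self] at hsub

lemma integral_sq_eq_condExp_add_sub_condExp [IsFiniteMeasure μ] {m : MeasurableSpace Ω}
    (hm : m ≤ mΩ) {f : Ω → ℝ} (hf : MemLp f 2 μ) :
    ∫ ω, f ω ^ 2 ∂μ = ∫ ω, (μ[f | m]) ω ^ 2 ∂μ + ∫ ω, (f - μ[f | m]) ω ^ 2 ∂μ := by
  have hE : MemLp (μ[f | m]) 2 μ := hf.condExp one_le_two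
  rw [← integral_sq_add_of_condExp_eq_zero hm stronglyMeasurable_condExp hE (hf.sub hE)
    (condExp_sub_condExp_ae_eq_zero hm (hf.integrable one_le_two))]
  simp only [Pi.sub_apply, add_sub_cancel]

/-- A square-integrable martingale difference sequence: `D k` is the increment of a martingale
between the times `k` and `k + 1`, hence measurable with respect to `ℱ (k + 1)`. -/
structure IsMartingaleDifference (D : ℕ → Ω → ℝ) (ℱ : Filtration ℕ mΩ) (μ : Measure Ω) :
    Prop where
  stronglyMeasurable (k : ℕ) : StronglyMeasurable[ℱ (k + 1)] (D k)
  memLp (k : ℕ) : MemLp (D k) 2 μ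
  condExp_eq_zero (k : ℕ) : μ[D k | ℱ k] =ᵐ[μ] 0

namespace IsMartingaleDifference

variable {D : ℕ → Ω → ℝ}

lemma const_smul (hD : IsMartingaleDifference D ℱ μ) (c : ℕ → ℝ) :
    IsMartingaleDifference (fun k ↦ c k • D k) ℱ μ where
  stronglyMeasurable k := (hD.stronglyMeasurable k).const_smul (c k)
  memLp k := (hD.memLp k).const_smul (c k)
  condExp_eq_zero k := by
    filter_upwards [condExp_smul (c k) (D k) (ℱ k) (μ := μ), hD.condExp_eq_zero k]
      with ω hsmul hzero
    rw [hsmul, Pi.smul_apply, hzero, Pi.zero_apply, smul_zero]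

lemma stronglyMeasurable_sum_range (hD : IsMartingaleDifference D ℱ μ) (n : ℕ) :
    StronglyMeasurable[ℱ n] (∑ k ∈ range n, D k) :=
  Finset.stronglyMeasurable_sum _ fun k hk ↦
    (hD.stronglyMeasurable k).mono (ℱ.mono (mem_range.1 hk))

lemma memLp_sum_range (hD : IsMartingaleDifference D ℱ μ) (n : ℕ) :
    MemLp (∑ k ∈ range n, D k) 2 μ :=
  memLp_finsetSum' _ fun k _ ↦ hD.memLp k

variable [IsFiniteMeasure μ]

lemma martingale_sum_range (hD : IsMartingaleDifference D ℱ μ) :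
    Martingale (fun n ↦ ∑ k ∈ range n, D k) ℱ μ :=
  martingale_of_condExp_sub_eq_zero_nat hD.stronglyMeasurable_sum_range
    (fun n ↦ (hD.memLp_sum_range n).integrable one_le_two) fun n ↦ by
      simpa only [sum_range_succ_sub_sum] using hD.condExp_eq_zero n

lemma integral_sq_sum_range (hD : IsMartingaleDifference D ℱ μ) (n : ℕ) :
    ∫ ω, (∑ k ∈ range n, D k) ω ^ 2 ∂μ = ∑ k ∈ range n, ∫ ω, D k ω ^ 2 ∂μ := by
  induction n with
  | zero => simp
  | succ n ih =>
    rw [sum_range_succ, sum_range_succ, ← ih]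
    exact integral_sq_add_of_condExp_eq_zero (ℱ.le n) (hD.stronglyMeasurable_sum_range n)
      (hD.memLp_sum_range n) (hD.memLp n) (hD.condExp_eq_zero n)

lemma ae_tendsto_average_zero (hD : IsMartingaleDifference D ℱ μ) {C : ℝ}
    (hC : ∀ k, ∫ ω, D k ω ^ 2 ∂μ ≤ C) :
    ∀ᵐ ω ∂μ, Tendsto (fun n : ℕ ↦ (n : ℝ)⁻¹ • ∑ k ∈ range n, D k ω) atTop (𝓝 0) := by
  have hW := hD.const_smul fun k ↦ (k + 1 : ℝ)⁻¹
  have hsum : Summable fun k : ℕ ↦ ((k + 1 : ℝ)⁻¹) ^ 2 * C := by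
    have := (summable_nat_add_iff 1).2 (Real.summable_nat_pow_inv.2 one_lt_two)
    simpa only [inv_pow, Nat.cast_succ] using this.mul_right C
  have hC0 : 0 ≤ C := (integral_nonneg fun ω ↦ sq_nonneg (D 0 ω)).trans (hC 0)
  have hbound (n : ℕ) : ∫ ω, (∑ k ∈ range n, (k + 1 : ℝ)⁻¹ • D k) ω ^ 2 ∂μ
      ≤ ∑' k : ℕ, ((k + 1 : ℝ)⁻¹) ^ 2 * C := by
    rw [hW.integral_sq_sum_range]
    refine (sum_le_sum fun k _ ↦ ?_).trans (hsum.sum_le_tsum (range n) fun k _ ↦ by positivity)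
    simp only [Pi.smul_apply, smul_eq_mul, mul_pow, integral_const_mul]
    gcongr
    exact hC k
  filter_upwards [ae_exists_tendsto_of_integral_sq_le hW.martingale_sum_range hW.memLp_sum_range
    hbound] with ω ⟨c, hc⟩
  refine tendsto_average_zero_of_tendsto_sum_inv_smul (c := c) ?_
  simpa only [Finset.sum_apply, Pi.smul_apply] using hc

end IsMartingaleDifference

lemma ae_exists_tendsto_average_of_condExp_succ_eq [IsFiniteMeasure μ] {u : ℕ → Ω → ℝ} {C : ℝ}
    (hmeas : ∀ k, StronglyMeasurable[ℱ (k + 1)] (u k)) (hL2 : ∀ k, MemLp (u k) 2 μ)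
    (hC : ∀ k, ∫ ω, u k ω ^ 2 ∂μ ≤ C) (hcid : ∀ k, μ[u (k + 1) | ℱ k] =ᵐ[μ] μ[u k | ℱ k]) :
    ∀ᵐ ω ∂μ, ∃ c, Tendsto (fun n : ℕ ↦ (n : ℝ)⁻¹ • ∑ k ∈ range n, u k ω) atTop (𝓝 c) := by
  set M : ℕ → Ω → ℝ := fun k ↦ μ[u k | ℱ k]
  have hMart : Martingale M ℱ μ :=
    martingale_nat (fun _ ↦ stronglyMeasurable_condExp) (fun _ ↦ integrable_condExp) fun k ↦
      ((condExp_condExp_of_le (ℱ.mono k.le_succ) (ℱ.le _)).trans (hcid k)).symm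
  have hDiff : IsMartingaleDifference (fun k ↦ u k - M k) ℱ μ :=
    { stronglyMeasurable := fun k ↦
        (hmeas k).sub (stronglyMeasurable_condExp.mono (ℱ.mono k.le_succ))
      memLp := fun k ↦ (hL2 k).sub ((hL2 k).condExp one_le_two)
      condExp_eq_zero := fun k ↦
        condExp_sub_condExp_ae_eq_zero (ℱ.le k) ((hL2 k).integrable one_le_two) }
  have hM2 (k : ℕ) : ∫ ω, M k ω ^ 2 ∂μ ≤ C := by
    refine le_trans ?_ (hC k)
    rw [integral_sq_eq_condExp_add_sub_condExp (ℱ.le k) (hL2 k)]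
    exact le_add_of_nonneg_right (integral_nonneg fun ω ↦ sq_nonneg _)
  have hD2 (k : ℕ) : ∫ ω, (u k - M k) ω ^ 2 ∂μ ≤ C := by
    refine le_trans ?_ (hC k)
    rw [integral_sq_eq_condExp_add_sub_condExp (ℱ.le k) (hL2 k)]
    exact le_add_of_nonneg_left (integral_nonneg fun ω ↦ sq_nonneg _)
  filter_upwards [ae_exists_tendsto_of_integral_sq_le hMart
    (fun k ↦ (hL2 k).condExp one_le_two) hM2, hDiff.ae_tendsto_average_zero hD2]
    with ω ⟨c, hc⟩ hzero
  refine ⟨c, ?_⟩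
  simpa only [← smul_add, ← sum_add_distrib, Pi.sub_apply, sub_add_cancel, zero_add]
    using hzero.add hc.cesaro_smul

end MartingaleDifference

section BirkhoffLimit

variable {α : Type*} {g : α → ℝ}

lemma tendsto_birkhoffAverage_apply_iff (hg : Bornology.IsBounded (Set.range g)) (T : α → α)
    (x : α) {l : ℝ} :
    Tendsto (birkhoffAverage ℝ T g · (T x)) atTop (𝓝 l) ↔
      Tendsto (birkhoffAverage ℝ T g · x) atTop (𝓝 l) :=
  tendsto_iff_of_dist <| by
    simpa only [dist_eq_norm, norm_zero] using
      (tendsto_birkhoffAverage_apply_sub_birkhoffAverage' ℝ hg T x).norm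

lemma tendsto_birkhoffAverage_iterate_iff (hg : Bornology.IsBounded (Set.range g)) (T : α → α)
    (n : ℕ) (x : α) {l : ℝ} :
    Tendsto (birkhoffAverage ℝ T g · (T^[n] x)) atTop (𝓝 l) ↔
      Tendsto (birkhoffAverage ℝ T g · x) atTop (𝓝 l) := by
  induction n with
  | zero => rfl
  | succ n ih => rw [Function.iterate_succ_apply', tendsto_birkhoffAverage_apply_iff hg, ih]

/-- The limit of the Birkhoff averages of `g` along the `T`-orbit of `x`; an unspecified value
where the averages diverge. -/
noncomputable def birkhoffLimit (T : α → α) (g : α → ℝ) (x : α) : ℝ :=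
  limUnder atTop (birkhoffAverage ℝ T g · x)

lemma birkhoffLimit_apply (hg : Bornology.IsBounded (Set.range g)) (T : α → α) (x : α) :
    birkhoffLimit T g (T x) = birkhoffLimit T g x := by
  have hiff (l : ℝ) := tendsto_birkhoffAverage_apply_iff hg T x (l := l)
  simp only [Tendsto] at hiff
  simp only [birkhoffLimit, limUnder, lim, hiff]

lemma measurable_birkhoffLimit [MeasurableSpace α] {T : α → α} (hT : Measurable T)
    (hg : Measurable g) : Measurable (birkhoffLimit T g) := by
  refine (StronglyMeasurable.limUnder fun n ↦ Measurable.stronglyMeasurable ?_).measurable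
  exact (Finset.measurable_fun_sum _ fun k _ ↦ hg.comp (hT.iterate k)).const_smul (n : ℝ)⁻¹

lemma measurable_invariants_birkhoffLimit [MeasurableSpace α] {T : α → α} (hT : Measurable T)
    (hg : Measurable g) (hgb : Bornology.IsBounded (Set.range g)) :
    Measurable[MeasurableSpace.invariants T] (birkhoffLimit T g) := by
  refine MeasurableSpace.measurable_invariants_dom.2 ⟨measurable_birkhoffLimit hT hg, ?_⟩
  have hinv : birkhoffLimit T g ∘ T = birkhoffLimit T g := funext (birkhoffLimit_apply hgb T)
  exact fun _ _ ↦ by rw [hinv]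

end BirkhoffLimit

section EmpiricalFrequency

variable {E : Type*}

/-- The left shift on sequences, `(x₀, x₁, …) ↦ (x₁, x₂, …)`. -/
def leftShift (x : ℕ → E) : ℕ → E := fun i ↦ x (i + 1)

lemma leftShift_iterate_apply (n : ℕ) (x : ℕ → E) (i : ℕ) : leftShift^[n] x i = x (i + n) := by
  induction n generalizing x with
  | zero => rfl
  | succ n ih => rw [Function.iterate_succ_apply, ih, leftShift, add_assoc]

/-- The indicator of the event that the first term of a sequence lies in `s`. -/
noncomputable def headIndicator (s : Set E) (x : ℕ → E) : ℝ := s.indicator 1 (x 0)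

/-- The asymptotic frequency of visits of the sequence `x` to `s`. -/
noncomputable def empiricalFrequency (s : Set E) (x : ℕ → E) : ℝ :=
  birkhoffLimit leftShift (headIndicator s) x

lemma norm_headIndicator_le_one (s : Set E) (x : ℕ → E) : ‖headIndicator s x‖ ≤ 1 :=
  (norm_indicator_le_norm_self _ _).trans_eq norm_one

lemma isBounded_range_headIndicator (s : Set E) :
    Bornology.IsBounded (Set.range (headIndicator s)) :=
  isBounded_iff_forall_norm_le.2 ⟨1, Set.forall_mem_range.2 (norm_headIndicator_le_one s)⟩

lemma birkhoffAverage_leftShift_headIndicator (s : Set E) (x : ℕ → E) (m n : ℕ) :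
    birkhoffAverage ℝ leftShift (headIndicator s) n (leftShift^[m] x) =
      (n : ℝ)⁻¹ • ∑ k ∈ range n, s.indicator (1 : E → ℝ) (x (m + k)) := by
  simp only [birkhoffAverage, birkhoffSum, headIndicator, leftShift_iterate_apply, zero_add,
    add_comm m]

variable [MeasurableSpace E]

lemma measurable_invariants_empiricalFrequency {s : Set E} (hs : MeasurableSet s) :
    Measurable[MeasurableSpace.invariants leftShift] (empiricalFrequency s) :=
  measurable_invariants_birkhoffLimit (measurable_pi_lambda _ fun i ↦ measurable_pi_apply (i + 1))
    ((measurable_one.indicator hs).comp (measurable_pi_apply 0)) (isBounded_range_headIndicator s)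

end EmpiricalFrequency

section Average

variable {F : Type*} [NormedAddCommGroup F] [NormedSpace ℝ F]

lemma norm_average_le {a : ℕ → F} {C : ℝ} (hC : ∀ k, ‖a k‖ ≤ C) (n : ℕ) :
    ‖(n : ℝ)⁻¹ • ∑ k ∈ range n, a k‖ ≤ C := by
  have hC0 : 0 ≤ C := (norm_nonneg _).trans (hC 0)
  have hsum : ‖∑ k ∈ range n, a k‖ ≤ n * C := by
    simpa using norm_sum_le_of_le (range n) fun k _ ↦ hC k
  rw [norm_smul, norm_inv, Real.norm_natCast]
  exact inv_mul_le_of_le_mul₀ n.cast_nonneg hC0 hsum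

variable [CompleteSpace F] {Ω : Type*} {m mΩ : MeasurableSpace Ω} {μ : Measure Ω}
  [IsFiniteMeasure μ]

lemma condExp_eq_of_tendsto_average {f : ℕ → Ω → F} {g : Ω → F} {C : ℝ}
    (hf : ∀ k, Integrable (f k) μ) (hC : ∀ k ω, ‖f k ω‖ ≤ C)
    (hconst : ∀ k, μ[f k | m] =ᵐ[μ] μ[f 0 | m])
    (hg : ∀ᵐ ω ∂μ, Tendsto (fun n : ℕ ↦ (n : ℝ)⁻¹ • ∑ k ∈ range n, f k ω) atTop (𝓝 (g ω))) :
    μ[g | m] =ᵐ[μ] μ[f 0 | m] := by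
  set A : ℕ → Ω → F := fun n ↦ ((n + 1 : ℕ) : ℝ)⁻¹ • ∑ k ∈ range (n + 1), f k with hA
  have hAg : ∀ᵐ ω ∂μ, Tendsto (fun n ↦ A n ω) atTop (𝓝 (g ω)) := by
    filter_upwards [hg] with ω hω
    simpa only [hA, Pi.smul_apply, Finset.sum_apply, Function.comp_def]
      using hω.comp (tendsto_add_atTop_nat 1)
  have hAC (n : ℕ) (ω : Ω) : ‖A n ω‖ ≤ C := by
    simpa only [hA, Pi.smul_apply, Finset.sum_apply] using norm_average_le (hC · ω) (n + 1)
  have hAcond (n : ℕ) : μ[A n | m] =ᵐ[μ] μ[f 0 | m] := by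
    filter_upwards [condExp_smul ((n + 1 : ℕ) : ℝ)⁻¹ (∑ k ∈ range (n + 1), f k) m,
      condExp_finsetSum (s := range (n + 1)) (fun k _ ↦ hf k) m, ae_all_iff.2 hconst]
      with ω hsmul hsum hconst
    rw [hsmul, Pi.smul_apply, hsum, Finset.sum_apply, sum_congr rfl fun k _ ↦ hconst k, sum_const,
      card_range, ← Nat.cast_smul_eq_nsmul ℝ, inv_smul_smul₀ (by positivity)]
  exact tendsto_condExp_unique A (fun _ ↦ f 0) g (f 0)
    (fun n ↦ (integrable_finsetSum' _ fun k _ ↦ hf k).smul _) (fun _ ↦ hf 0) hAg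
    (ae_of_all _ fun _ ↦ tendsto_const_nhds) (fun _ ↦ C) (integrable_const C) (fun _ ↦ C)
    (integrable_const C) (fun n ↦ ae_of_all _ (hAC n)) (fun _ ↦ ae_of_all _ (hC 0)) hAcond

end Average

section PathSigmaAlgebras

variable {Ω E : Type*} [MeasurableSpace E]

/-- The σ-algebra generated by `Y 0, …, Y (n - 1)`. -/
abbrev strictPast (Y : ℕ → Ω → E) (n : ℕ) : MeasurableSpace Ω :=
  MeasurableSpace.comap (fun ω (i : Fin n) ↦ Y i ω) inferInstance

/-- The shift-invariant σ-algebra of the sequence `Y`: the events `{Y ∈ B}` with `B` invariant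
under the left shift. -/
abbrev shiftInvariant (Y : ℕ → Ω → E) : MeasurableSpace Ω :=
  (MeasurableSpace.invariants leftShift).comap fun ω i ↦ Y i ω

lemma strictPast_mono (Y : ℕ → Ω → E) : Monotone (strictPast Y) := by
  rintro m n hmn _ ⟨C, hC, rfl⟩
  refine ⟨(fun (z : Fin n → E) (i : Fin m) ↦ z (Fin.castLE hmn i)) ⁻¹' C, ?_, rfl⟩
  exact measurable_pi_lambda _ (fun i ↦ measurable_pi_apply _) hC

lemma measurable_strictPast_succ (Y : ℕ → Ω → E) (n : ℕ) :
    Measurable[strictPast Y (n + 1)] (Y n) :=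
  (measurable_pi_apply (Fin.last n)).comp
    (comap_measurable fun ω (i : Fin (n + 1)) ↦ Y i ω)

variable [mΩ : MeasurableSpace Ω] {Y : ℕ → Ω → E}

lemma shiftInvariant_le (hY : ∀ n, Measurable (Y n)) : shiftInvariant Y ≤ mΩ :=
  (MeasurableSpace.comap_mono (MeasurableSpace.invariants_le _)).trans
    (measurable_pi_lambda _ hY).comap_le

/-- The filtration `n ↦ strictPast Y n`. Unlike in `Filtration.natural`, the variable `Y n` is
revealed at time `n + 1`. -/
def pastFiltration (hY : ∀ n, Measurable (Y n)) : Filtration ℕ mΩ where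
  seq := strictPast Y
  mono' := strictPast_mono Y
  le' _ := (measurable_pi_lambda _ fun i : Fin _ ↦ hY i).comap_le

end PathSigmaAlgebras

section ConditionallyCID

variable {Ω E : Type*} [MeasurableSpace E]

/-- The sequence `Y` is conditionally identically distributed given the σ-algebra `m`: given `m`,
the next variable `Y n` and the one after it are equally distributed jointly with the past
`Y 0, …, Y (n - 1)`. -/
def IsCIDGiven (m : MeasurableSpace Ω) {_ : MeasurableSpace Ω} (μ : Measure Ω)
    (Y : ℕ → Ω → E) : Prop :=
  ∀ (n : ℕ) (G : Set Ω), MeasurableSet[strictPast Y n] G → ∀ s : Set E, MeasurableSet s →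
    μ⟦G ∩ Y (n + 1) ⁻¹' s | m⟧ =ᵐ[μ] μ⟦G ∩ Y n ⁻¹' s | m⟧

namespace IsCIDGiven

variable {m mΩ : MeasurableSpace Ω} {μ : Measure Ω} {Y : ℕ → Ω → E}

lemma condExp_inter_of_le (h : IsCIDGiven m μ Y) {n k : ℕ} (hnk : n ≤ k) {G : Set Ω}
    (hG : MeasurableSet[strictPast Y n] G) {s : Set E} (hs : MeasurableSet s) :
    μ⟦G ∩ Y k ⁻¹' s | m⟧ =ᵐ[μ] μ⟦G ∩ Y n ⁻¹' s | m⟧ := by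
  induction k, hnk using Nat.le_induction with
  | base => rfl
  | succ k hk ih => exact (h k G (strictPast_mono Y hk _ hG) s hs).trans ih

variable [IsFiniteMeasure μ]

lemma condExp_pastFiltration_succ (h : IsCIDGiven m μ Y) (hm : m ≤ mΩ)
    (hY : ∀ n, Measurable (Y n)) {s : Set E} (hs : MeasurableSet s) (n : ℕ) :
    μ⟦Y (n + 1) ⁻¹' s | pastFiltration hY n⟧ =ᵐ[μ] μ⟦Y n ⁻¹' s | pastFiltration hY n⟧ := by
  have hint (k : ℕ) : Integrable ((Y k ⁻¹' s).indicator fun _ ↦ (1 : ℝ)) μ :=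
    (integrable_const 1).indicator (hY k hs)
  refine ae_eq_condExp_of_forall_setIntegral_eq ((pastFiltration hY).le n) (hint n)
    (fun _ _ _ ↦ integrable_condExp.integrableOn) (fun G hG _ ↦ ?_)
    stronglyMeasurable_condExp.aestronglyMeasurable
  have hGm : MeasurableSet G := (pastFiltration hY).le n _ hG
  have hset (k : ℕ) : ∫ ω in G, (Y k ⁻¹' s).indicator (fun _ ↦ (1 : ℝ)) ω ∂μ
      = ∫ ω, (μ⟦G ∩ Y k ⁻¹' s | m⟧) ω ∂μ := by
    rw [integral_condExp hm, ← integral_indicator hGm, Set.indicator_indicator]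
  rw [setIntegral_condExp _ (hint _) hG, hset, hset]
  exact integral_congr_ae (h n G hG s hs)

lemma ae_tendsto_empiricalFrequency (h : IsCIDGiven m μ Y) (hm : m ≤ mΩ)
    (hY : ∀ n, Measurable (Y n)) {s : Set E} (hs : MeasurableSet s) :
    ∀ᵐ ω ∂μ, Tendsto (birkhoffAverage ℝ leftShift (headIndicator s) · (Y · ω)) atTop
      (𝓝 (empiricalFrequency s (Y · ω))) := by
  set u : ℕ → Ω → ℝ := fun k ↦ (Y k ⁻¹' s).indicator fun _ ↦ 1 with hu
  have hmeas (k : ℕ) : StronglyMeasurable[pastFiltration hY (k + 1)] (u k) :=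
    stronglyMeasurable_const.indicator (measurable_strictPast_succ Y k hs)
  have hL2 (k : ℕ) : MemLp (u k) 2 μ := (memLp_const 1).indicator (hY k hs)
  have hC (k : ℕ) : ∫ ω, u k ω ^ 2 ∂μ ≤ μ.real Set.univ := by
    have hsq (ω : Ω) : u k ω ^ 2 = (Y k ⁻¹' s).indicator 1 ω := by
      by_cases hω : Y k ω ∈ s <;> simp [hu, hω]
    simp only [hsq, integral_indicator_one (hY k hs)]
    exact measureReal_mono (Set.subset_univ _)
  filter_upwards [ae_exists_tendsto_average_of_condExp_succ_eq hmeas hL2 hC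
    (h.condExp_pastFiltration_succ hm hY hs)] with ω hω
  refine tendsto_nhds_limUnder (hω.imp fun c hc ↦ hc.congr fun n ↦ ?_)
  have havg := birkhoffAverage_leftShift_headIndicator s (Y · ω) 0 n
  simp only [zero_add] at havg
  exact havg.symm

lemma ae_norm_empiricalFrequency_le_one (h : IsCIDGiven m μ Y) (hm : m ≤ mΩ)
    (hY : ∀ n, Measurable (Y n)) {s : Set E} (hs : MeasurableSet s) :
    ∀ᵐ ω ∂μ, ‖empiricalFrequency s (Y · ω)‖ ≤ 1 := by
  filter_upwards [h.ae_tendsto_empiricalFrequency hm hY hs] with ω hω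
  exact le_of_tendsto hω.norm
    (Eventually.of_forall <| norm_average_le fun _ ↦ norm_headIndicator_le_one s _)

lemma ae_tendsto_average_indicator_inter (h : IsCIDGiven m μ Y) (hm : m ≤ mΩ)
    (hY : ∀ n, Measurable (Y n)) {s : Set E} (hs : MeasurableSet s) (n : ℕ) (G : Set Ω) :
    ∀ᵐ ω ∂μ, Tendsto (fun N : ℕ ↦
        (N : ℝ)⁻¹ • ∑ k ∈ range N, (G ∩ Y (n + k) ⁻¹' s).indicator (fun _ ↦ (1 : ℝ)) ω) atTop
      (𝓝 (empiricalFrequency s (Y · ω) * G.indicator (fun _ ↦ 1) ω)) := by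
  filter_upwards [h.ae_tendsto_empiricalFrequency hm hY hs] with ω hω
  have htail := (tendsto_birkhoffAverage_iterate_iff (isBounded_range_headIndicator s) leftShift n
    (Y · ω)).2 hω
  simp only [birkhoffAverage_leftShift_headIndicator] at htail
  refine (htail.mul_const _).congr fun N ↦ ?_
  rw [smul_mul_assoc, sum_mul]
  congr! 2 with k
  by_cases hG : ω ∈ G <;> by_cases hs : Y (n + k) ω ∈ s <;> simp [hG, hs]

lemma condExp_inter_eq_mul (h : IsCIDGiven m μ Y) (hm : m ≤ mΩ) (hI : shiftInvariant Y ≤ m)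
    (hY : ∀ n, Measurable (Y n)) {n : ℕ} {G : Set Ω} (hG : MeasurableSet[strictPast Y n] G)
    {s : Set E} (hs : MeasurableSet s) :
    μ⟦G ∩ Y n ⁻¹' s | m⟧ =ᵐ[μ] (fun ω ↦ empiricalFrequency s (Y · ω)) * μ⟦G | m⟧ := by
  have hGm : MeasurableSet G := (pastFiltration hY).le n _ hG
  have hVm : StronglyMeasurable[m] fun ω ↦ empiricalFrequency s (Y · ω) :=
    (((measurable_invariants_empiricalFrequency hs).comp (comap_measurable _)).mono hI
      le_rfl).stronglyMeasurable
  have hGi : Integrable (G.indicator fun _ ↦ (1 : ℝ)) μ := (integrable_const 1).indicator hGm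
  have hVG := hGi.bdd_mul (hVm.mono hm).aestronglyMeasurable
    (h.ae_norm_empiricalFrequency_le_one hm hY hs)
  have hsame : μ[(fun ω ↦ empiricalFrequency s (Y · ω)) * G.indicator fun _ ↦ 1 | m]
      =ᵐ[μ] μ⟦G ∩ Y n ⁻¹' s | m⟧ :=
    condExp_eq_of_tendsto_average (f := fun k ↦ (G ∩ Y (n + k) ⁻¹' s).indicator fun _ ↦ 1)
      (fun k ↦ (integrable_const 1).indicator (hGm.inter (hY (n + k) hs)))
      (fun k ω ↦ (norm_indicator_le_norm_self (fun _ ↦ (1 : ℝ)) ω).trans_eq norm_one)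
      (fun k ↦ h.condExp_inter_of_le (n.le_add_right k) hG hs)
      (h.ae_tendsto_average_indicator_inter hm hY hs n G)
  exact hsame.symm.trans (condExp_mul_of_stronglyMeasurable_left hVm hVG hGi)

lemma condExp_iInter_eq_prod (h : IsCIDGiven m μ Y) (hm : m ≤ mΩ) (hI : shiftInvariant Y ≤ m)
    (hY : ∀ n, Measurable (Y n)) {n : ℕ} {t : Fin n → Set E} (ht : ∀ i, MeasurableSet (t i)) :
    μ⟦⋂ i : Fin n, Y i ⁻¹' t i | m⟧ =ᵐ[μ] fun ω ↦ ∏ i, empiricalFrequency (t i) (Y · ω) := by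
  induction n with
  | zero => simp [condExp_const hm]
  | succ n ih =>
    have hsplit : ⋂ i : Fin (n + 1), Y i ⁻¹' t i =
        (⋂ i : Fin n, Y i ⁻¹' t i.castSucc) ∩ Y n ⁻¹' t (Fin.last n) := by
      ext ω
      simp [Fin.forall_fin_succ']
    have hG : MeasurableSet[strictPast Y n] (⋂ i : Fin n, Y i ⁻¹' t i.castSucc) :=
      ⟨Set.univ.pi fun i ↦ t i.castSucc, MeasurableSet.univ_pi fun i ↦ ht _, by ext; simp⟩
    rw [hsplit]
    filter_upwards [h.condExp_inter_eq_mul hm hI hY hG (ht (Fin.last n)),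
      ih fun i ↦ ht i.castSucc] with ω hlast hinit
    rw [hlast, Pi.mul_apply, hinit, Fin.prod_univ_castSucc, mul_comm]

end IsCIDGiven

end ConditionallyCID

section Exchangeability

variable {Ω E : Type*} {m mΩ : MeasurableSpace Ω} [MeasurableSpace E] {μ : Measure Ω}
  [IsFiniteMeasure μ]

lemma map_perm_eq_of_condExp_iInter_eq_prod {ι : Type*} [Fintype ι] (hm : m ≤ mΩ)
    {Z : ι → Ω → E} (hZ : ∀ i, Measurable (Z i)) {V : Set E → Ω → ℝ}
    (hV : ∀ t : ι → Set E, (∀ i, MeasurableSet (t i)) →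
      μ⟦⋂ i, Z i ⁻¹' t i | m⟧ =ᵐ[μ] fun ω ↦ ∏ i, V (t i) ω) (σ : Equiv.Perm ι) :
    μ.map (fun ω i ↦ Z (σ i) ω) = μ.map fun ω i ↦ Z i ω := by
  have hmeas (τ : Equiv.Perm ι) : Measurable fun ω i ↦ Z (τ i) ω :=
    measurable_pi_lambda _ fun i ↦ hZ (τ i)
  have hbox (t : ι → Set E) (ht : ∀ i, MeasurableSet (t i)) :
      μ.real (⋂ i, Z i ⁻¹' t i) = ∫ ω, ∏ i, V (t i) ω ∂μ := by
    rw [← integral_congr_ae (hV t ht), integral_condExp hm]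
    exact (integral_indicator_one (MeasurableSet.iInter fun i ↦ hZ i (ht i))).symm
  have hperm (τ : Equiv.Perm ι) (t : ι → Set E) (ht : ∀ i, MeasurableSet (t i)) :
      (μ.map fun ω i ↦ Z (τ i) ω).real (Set.univ.pi t) = ∫ ω, ∏ i, V (t i) ω ∂μ := by
    have hpre : (fun ω i ↦ Z (τ i) ω) ⁻¹' Set.univ.pi t = ⋂ i, Z i ⁻¹' t (τ.symm i) := by
      ext ω
      simpa using τ.forall_congr_left (p := fun i ↦ Z (τ i) ω ∈ t i)
    rw [map_measureReal_apply (hmeas τ) (MeasurableSet.univ_pi ht), hpre, hbox _ fun i ↦ ht _]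
    congr with ω
    exact τ.symm.prod_comp fun i ↦ V (t i) ω
  refine ext_of_generate_finite _ generateFrom_pi.symm isPiSystem_pi ?_ ?_
  · rintro _ ⟨t, ht, rfl⟩
    have ht' (i : ι) : MeasurableSet (t i) := ht i trivial
    exact (measureReal_eq_measureReal_iff).1 ((hperm σ t ht').trans (hperm 1 t ht').symm)
  · rw [Measure.map_apply (hmeas σ) .univ, Measure.map_apply (measurable_pi_lambda _ hZ) .univ]
    rfl

lemma IsCIDGiven.map_perm_eq {Y : ℕ → Ω → E} (h : IsCIDGiven m μ Y) (hm : m ≤ mΩ)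
    (hI : shiftInvariant Y ≤ m) (hY : ∀ n, Measurable (Y n)) (n : ℕ) (σ : Equiv.Perm (Fin n)) :
    μ.map (fun ω (i : Fin n) ↦ Y (σ i) ω) = μ.map fun ω (i : Fin n) ↦ Y i ω :=
  map_perm_eq_of_condExp_iInter_eq_prod (Z := fun i : Fin n ↦ Y i) hm (fun i ↦ hY i)
    (V := fun s ω ↦ empiricalFrequency s (Y · ω))
    (fun _ ht ↦ h.condExp_iInter_eq_prod hm hI hY ht) σ

lemma condExp_eq_of_forall_cond_eq (hm : m ≤ mΩ) {A B : Set Ω} (hA : MeasurableSet A)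
    (hB : MeasurableSet B)
    (h : ∀ H, MeasurableSet[m] H → μ H ≠ 0 → μ[A | H] = μ[B | H]) :
    μ⟦A | m⟧ =ᵐ[μ] μ⟦B | m⟧ := by
  have hint {C : Set Ω} (hC : MeasurableSet C) : Integrable (C.indicator fun _ ↦ (1 : ℝ)) μ :=
    (integrable_const 1).indicator hC
  have hset {C H : Set Ω} (hC : MeasurableSet C) :
      ∫ ω in H, C.indicator (fun _ ↦ (1 : ℝ)) ω ∂μ = μ.real (H ∩ C) := by
    rw [setIntegral_indicator hC, setIntegral_const, smul_eq_mul, mul_one]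
  refine ae_eq_condExp_of_forall_setIntegral_eq hm (hint hB)
    (fun _ _ _ ↦ integrable_condExp.integrableOn) (fun H hH _ ↦ ?_)
    stronglyMeasurable_condExp.aestronglyMeasurable
  rw [setIntegral_condExp hm (hint hA) hH, hset hA, hset hB, measureReal_eq_measureReal_iff]
  by_cases hH0 : μ H = 0
  · rw [measure_inter_null_of_null_left A hH0, measure_inter_null_of_null_left B hH0]
  · rw [← cond_mul_eq_inter (hm H hH), ← cond_mul_eq_inter (hm H hH), h H hH hH0]

end Exchangeability

section IsCIDnat

variable {Ω E : Type*} {mΩ : MeasurableSpace Ω} [MeasurableSpace E] {μ : Measure Ω}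

lemma IsCIDnat.measure_inter_preimage_eq {X : ℕ → Ω → E} (h : IsCIDnat μ X)
    (hX : ∀ n, Measurable (X n)) {n : ℕ} {G : Set Ω}
    (hG : MeasurableSet[strictPast (fun k ↦ X (k + 1)) n] G) {s : Set E} (hs : MeasurableSet s) :
    μ (G ∩ X (n + 2) ⁻¹' s) = μ (G ∩ X (n + 1) ⁻¹' s) := by
  obtain ⟨C, hC, rfl⟩ := hG
  set S : Set (Fin (n + 1) → E) :=
    (fun z (i : Fin n) ↦ z i.castSucc) ⁻¹' C ∩ (fun z ↦ z (Fin.last n)) ⁻¹' s with hS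
  have hSm : MeasurableSet S :=
    (measurable_pi_lambda _ (fun i ↦ measurable_pi_apply _) hC).inter (measurable_pi_apply _ hs)
  have heq := congrArg (fun ν ↦ ν S) (h n)
  rw [Measure.map_apply (measurable_pi_lambda _ fun i ↦ ?_) hSm,
    Measure.map_apply (measurable_pi_lambda _ fun i ↦ hX _) hSm] at heq
  · convert heq using 2
    · ext ω
      simp [hS]
    · rfl
  · split_ifs <;> exact hX _

end IsCIDnat

theorem stmt16_general {Ω E : Type*} {mΩ : MeasurableSpace Ω} [MeasurableSpace E]
    (μ : Measure Ω) [IsFiniteMeasure μ] (X : ℕ → Ω → E)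
    (hX : ∀ n, Measurable (X n))
    (h : ∀ B : Set (ℕ → E), MeasurableSet B →
      (∀ x : ℕ → E, x ∈ B ↔ (fun i => x (i + 1)) ∈ B) →
      μ ((fun ω (i : ℕ) => X (i + 1) ω) ⁻¹' B) ≠ 0 →
      IsCIDnat (μ[|(fun ω (i : ℕ) => X (i + 1) ω) ⁻¹' B]) X) :
    IsExchangeable μ X := by
  have hY (n : ℕ) : Measurable (X (n + 1)) := hX (n + 1)
  have hI : shiftInvariant (fun n ↦ X (n + 1)) ≤ mΩ := shiftInvariant_le hY
  have hcid : IsCIDGiven (shiftInvariant fun n ↦ X (n + 1)) μ fun n ↦ X (n + 1) := by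
    intro n G hG s hs
    have hGm : MeasurableSet G := (pastFiltration hY).le n _ hG
    refine condExp_eq_of_forall_cond_eq hI (hGm.inter (hY _ hs)) (hGm.inter (hY _ hs)) ?_
    rintro _ ⟨B, ⟨hB, hBinv⟩, rfl⟩ hpos
    have hBiff (x : ℕ → E) : x ∈ B ↔ leftShift x ∈ B := (Set.ext_iff.1 hBinv x).symm
    exact (h B hB hBiff hpos).measure_inter_preimage_eq hX hG hs
  exact hcid.map_perm_eq hI le_rfl hY

/-- If `(X n)` is c.i.d. under `P(·|H)` for every event `H` of positive probability in
the shift-invariant σ-field of `(X n)`, then `(X n)` is exchangeable. -/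
theorem stmt16 {Ω E : Type*} {mΩ : MeasurableSpace Ω}
    [TopologicalSpace E] [PolishSpace E] [MeasurableSpace E] [BorelSpace E]
    (μ : Measure Ω) [IsProbabilityMeasure μ] (X : ℕ → Ω → E)
    (hX : ∀ n, Measurable (X n))
    (h : ∀ B : Set (ℕ → E), MeasurableSet B →
      (∀ x : ℕ → E, x ∈ B ↔ (fun i => x (i + 1)) ∈ B) →
      μ ((fun ω (i : ℕ) => X (i + 1) ω) ⁻¹' B) ≠ 0 →
      IsCIDnat (μ[|(fun ω (i : ℕ) => X (i + 1) ω) ⁻¹' B]) X) :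
    IsExchangeable μ X :=
  stmt16_general μ X hX h
end
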